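/- Let Σ be a fan in ℝ^n satisfying conditions (2.9.1) and (2.9.2). For each 1 ≤ i ≤ r, each r-tuple D = (d_1,…,d_r) of positive integers, and any admissible choice of the pair (φ_D, x_D), the stabilization map s_{D,i} : Pol*_D(S¹,X_Σ) → Pol*_{D+e_i}(S¹,X_Σ) is a homotopy equivalence through dimension d(D,Σ) = 2(r_min(Σ)−1)·d_min − 2. -/

import Mathlib

open scoped BigOperators
attribute [local instance] Classical.propDecidable

noncomputable section

namespace Toric


/-! ### Cones and fans -/

/-- The real vector associated to an integer vector. -/
def zr {n : ℕ} (v : Fin n → ℤ) : Fin n → ℝ := fun i => (v i : ℝ)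

/-- A convex rational polyhedral cone in `ℝ^n`. -/
def IsRatCone {n : ℕ} (σ : Set (Fin n → ℝ)) : Prop :=
  ∃ s : Finset (Fin n → ℤ),
    σ = {x | ∃ lam : (Fin n → ℤ) → ℝ, (∀ v, 0 ≤ lam v) ∧ x = ∑ v ∈ s, lam v • zr v}

/-- A cone is strongly convex if `σ ∩ (-σ) = {0}`. -/
def StronglyConvex {n : ℕ} (σ : Set (Fin n → ℝ)) : Prop := σ ∩ (-σ) = {0}

/-- `τ` is a face of `σ`, cut out by a linear form nonnegative on `σ`. -/
def IsFaceOf {n : ℕ} (τ σ : Set (Fin n → ℝ)) : Prop :=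
  ∃ L : (Fin n → ℝ) →ₗ[ℝ] ℝ, (∀ x ∈ σ, 0 ≤ L x) ∧ τ = σ ∩ {x | L x = 0}

/-- A fan in `ℝ^n`: a finite collection of strongly convex rational polyhedral cones,
closed under taking faces, such that the intersection of two cones is a face of each;
we also require that it strictly contains `{0}`. -/
structure Fan (n : ℕ) where
  cones : Set (Set (Fin n → ℝ))
  finite : cones.Finite
  ratCone : ∀ σ ∈ cones, IsRatCone σ
  stronglyConvex : ∀ σ ∈ cones, StronglyConvex σ
  face_mem : ∀ σ ∈ cones, ∀ τ, IsFaceOf τ σ → τ ∈ cones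
  inter_face : ∀ σ ∈ cones, ∀ τ ∈ cones, IsFaceOf (σ ∩ τ) σ
  zero_mem : ({0} : Set (Fin n → ℝ)) ∈ cones
  nontrivial : cones ≠ {({0} : Set (Fin n → ℝ))}

/-- A fan is complete if its cones cover `ℝ^n`. -/
def Fan.Complete {n : ℕ} (F : Fan n) : Prop := ⋃₀ F.cones = Set.univ

/-- A fan is non-singular if each of its cones is spanned by part of a `ℤ`-basis of `ℤ^n`. -/
def Fan.NonSingular {n : ℕ} (F : Fan n) : Prop :=
  ∀ σ ∈ F.cones, ∃ (b : Module.Basis (Fin n) ℤ (Fin n → ℤ)) (s : Finset (Fin n)),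
    σ = {x | ∃ lam : Fin n → ℝ, (∀ i, 0 ≤ lam i) ∧ x = ∑ i ∈ s, lam i • zr (b i)}

/-- The ray (one-dimensional cone) generated by a vector. -/
def ray {n : ℕ} (v : Fin n → ℝ) : Set (Fin n → ℝ) := {x | ∃ t : ℝ, 0 ≤ t ∧ x = t • v}

/-- The cone spanned by the vectors `n_i`, `i ∈ s`. -/
def coneIdx {n r : ℕ} (N : Fin r → Fin n → ℤ) (s : Finset (Fin r)) : Set (Fin n → ℝ) :=
  {x | ∃ lam : Fin r → ℝ, (∀ i, 0 ≤ lam i) ∧ x = ∑ i ∈ s, lam i • zr (N i)}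

/-- A point of `ℝ^n` lying in the lattice `ℤ^n`. -/
def IsLatticePoint {n : ℕ} (x : Fin n → ℝ) : Prop := ∀ i, ∃ m : ℤ, x i = (m : ℝ)

/-- `N 1, …, N r` is the (complete, repetition-free) list of primitive generators of the
one-dimensional cones of the fan `F`. -/
structure IsPrimGens {n r : ℕ} (F : Fan n) (N : Fin r → Fin n → ℤ) : Prop where
  ray_mem : ∀ k, ray (zr (N k)) ∈ F.cones
  ne_zero : ∀ k, N k ≠ 0
  primitive : ∀ k, ray (zr (N k)) ∩ {x | IsLatticePoint x}
      = {x | ∃ c : ℕ, x = (c : ℝ) • zr (N k)}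
  inj : Function.Injective N
  complete : ∀ σ ∈ F.cones, Module.finrank ℝ (Submodule.span ℝ σ) = 1 →
      ∃ k, σ = ray (zr (N k))

/-- Condition (2.9.1): a positive integral relation among the primitive generators. -/
def Cond1 {n r : ℕ} (N : Fin r → Fin n → ℤ) : Prop :=
  ∃ d : Fin r → ℕ, (∀ k, 0 < d k) ∧ ∑ k, (d k : ℤ) • N k = 0

/-- Condition (2.9.2): the primitive generators span `ℤ^n` over `ℤ`. -/
def Cond2 {n r : ℕ} (N : Fin r → Fin n → ℤ) : Prop :=
  Submodule.span ℤ (Set.range N) = ⊤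

/-- The underlying simplicial complex `K_Σ` of a fan. -/
def KC {n r : ℕ} (F : Fan n) (N : Fin r → Fin n → ℤ) : Set (Finset (Fin r)) :=
  {s | coneIdx N s ∈ F.cones}

/-- A primitive set: it spans no cone of the fan, but every proper subset does. -/
def PrimitiveSet {r : ℕ} (K : Set (Finset (Fin r))) (s : Finset (Fin r)) : Prop :=
  s ∉ K ∧ ∀ t ⊂ s, t ∈ K

/-- `r_min`: the minimal cardinality of a primitive set. -/
def rmin {r : ℕ} (K : Set (Finset (Fin r))) : ℕ :=
  sInf {m | ∃ s : Finset (Fin r), PrimitiveSet K s ∧ s.card = m}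

/-- `d_min = min {d_1, …, d_r}`. -/
def dmin {r : ℕ} (D : Fin r → ℕ) : ℕ := sInf (Set.range D)

/-- The stability dimension `d(D,Σ) = 2(r_min − 1) d_min − 2`. -/
def dBound {r : ℕ} (K : Set (Finset (Fin r))) (D : Fin r → ℕ) : ℤ :=
  2 * ((rmin K : ℤ) - 1) * (dmin D : ℤ) - 2

/-- The connectivity bound `C_D(Σ) = 2(r_min − 1) d_min − 1`. -/
def CBound {r : ℕ} (K : Set (Finset (Fin r))) (D : Fin r → ℕ) : ℤ :=
  2 * ((rmin K : ℤ) - 1) * (dmin D : ℤ) - 1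

/-! ### Coordinate subspaces, `U(K)`, `G_Σ` and the toric quotient -/

/-- The coordinate subspace `L_σ ⊆ ℂ^r`. -/
def LSub {r : ℕ} (σ : Finset (Fin r)) : Set (Fin r → ℂ) := {x | ∀ i ∈ σ, x i = 0}

/-- The complement `U(K)` of the coordinate subspace arrangement of type `K`. -/
def UK {r : ℕ} (K : Set (Finset (Fin r))) : Set (Fin r → ℂ) :=
  (⋃ σ ∈ {s : Finset (Fin r) | s ∉ K}, LSub σ)ᶜ

lemma mem_UK {r : ℕ} {K : Set (Finset (Fin r))} {x : Fin r → ℂ} :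
    x ∈ UK K ↔ ∀ σ : Finset (Fin r), σ ∉ K → ∃ i ∈ σ, x i ≠ 0 := by
  constructor
  · intro h σ hσ
    by_contra hc
    push_neg at hc
    exact h (Set.mem_biUnion hσ (fun i hi => hc i hi))
  · intro h hx
    rcases Set.mem_iUnion₂.1 hx with ⟨σ, hσ, hxσ⟩
    rcases h σ hσ with ⟨i, hi, hne⟩
    exact hne (hxσ i hi)

/-- The group `G_Σ` (as a subset of `ℂ^r`). -/
def GSet {n r : ℕ} (N : Fin r → Fin n → ℤ) : Set (Fin r → ℂ) :=
  {μ | (∀ k, μ k ≠ 0) ∧ ∀ m : Fin n → ℤ, ∏ k, μ k ^ (∑ j, N k j * m j) = 1}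

/-- The orbit relation of the `G_Σ`-action on `U(K_Σ)`. -/
def toricRel {n r : ℕ} (N : Fin r → Fin n → ℤ) (K : Set (Finset (Fin r)))
    (x y : ↥(UK K)) : Prop :=
  ∃ μ ∈ GSet N, (fun i => μ i * (x : Fin r → ℂ) i) = (y : Fin r → ℂ)

/-- The toric variety `X_Σ = U(K_Σ)/G_Σ`, as a topological quotient. -/
def XS {n r : ℕ} (N : Fin r → Fin n → ℤ) (K : Set (Finset (Fin r))) : Type :=
  Quot (toricRel N K)

instance {n r : ℕ} (N : Fin r → Fin n → ℤ) (K : Set (Finset (Fin r))) :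
    TopologicalSpace (XS N K) :=
  instTopologicalSpaceQuot

/-- The quotient map `q_Σ : U(K_Σ) → X_Σ`. -/
def qmap {n r : ℕ} (N : Fin r → Fin n → ℤ) (K : Set (Finset (Fin r))) :
    ↥(UK K) → XS N K :=
  Quot.mk (toricRel N K)

/-- `q_Σ` as a continuous map. -/
def qCont {n r : ℕ} (N : Fin r → Fin n → ℤ) (K : Set (Finset (Fin r))) :
    C(↥(UK K), XS N K) :=
  ⟨qmap N K, continuous_quot_mk⟩

lemma coneIdx_empty {n r : ℕ} (N : Fin r → Fin n → ℤ) :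
    coneIdx N (∅ : Finset (Fin r)) = ({0} : Set (Fin n → ℝ)) := by
  ext x
  constructor
  · rintro ⟨lam, -, hx⟩
    simpa using hx
  · intro hx
    exact ⟨0, fun i => le_refl 0, by simpa using hx⟩

lemma empty_mem_KC {n r : ℕ} (F : Fan n) (N : Fin r → Fin n → ℤ) :
    (∅ : Finset (Fin r)) ∈ KC F N := by
  show coneIdx N ∅ ∈ F.cones
  rw [coneIdx_empty]
  exact F.zero_mem

/-- The point `(1,…,1)`. -/
def onesC {r : ℕ} : Fin r → ℂ := fun _ => 1

lemma ones_mem_UK {r : ℕ} {K : Set (Finset (Fin r))} (h : (∅ : Finset (Fin r)) ∈ K) :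
    (onesC : Fin r → ℂ) ∈ UK K := by
  rw [mem_UK]
  intro σ hσ
  rcases Finset.nonempty_iff_ne_empty.2 (fun he : σ = ∅ => hσ (by rw [he]; exact h)) with ⟨i, hi⟩
  exact ⟨i, hi, one_ne_zero⟩

/-- The base point `(1,…,1)` of `U(K_Σ)`. -/
def onesUK {r : ℕ} {K : Set (Finset (Fin r))} (h : (∅ : Finset (Fin r)) ∈ K) : ↥(UK K) :=
  ⟨onesC, ones_mem_UK h⟩

/-- The base point `[1,…,1]` of `X_Σ`. -/
def baseX {n r : ℕ} (N : Fin r → Fin n → ℤ) (K : Set (Finset (Fin r)))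
    (h : (∅ : Finset (Fin r)) ∈ K) : XS N K :=
  qmap N K (onesUK h)



/-! ### Spaces of tuples of monic polynomials -/

/-- The monic polynomial `z^d + a_{d-1} z^{d-1} + ⋯ + a_0` with coefficient data `a`. -/
def toPoly {d : ℕ} (a : Fin d → ℂ) : Polynomial ℂ :=
  Polynomial.X ^ d + ∑ i : Fin d, Polynomial.C (a i) * Polynomial.X ^ (i : ℕ)

/-- The space `Pol*_D(S¹, X_Σ)` of `r`-tuples of monic polynomials of multidegree `D`
(in coefficient coordinates) such that for every `σ ∉ K` the polynomials `{f_i : i ∈ σ}`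
have no common real root. -/
def PolSp {r : ℕ} (K : Set (Finset (Fin r))) (D : Fin r → ℕ) :
    Set (∀ k : Fin r, Fin (D k) → ℂ) :=
  {f | ∀ σ : Finset (Fin r), σ ∉ K → ∀ t : ℝ,
        ∃ k ∈ σ, (toPoly (f k)).eval (t : ℂ) ≠ 0}

lemma polEval_mem_UK {r : ℕ} {K : Set (Finset (Fin r))} {D : Fin r → ℕ}
    (f : ↥(PolSp K D)) (t : ℝ) :
    (fun k => (toPoly (f.1 k)).eval (t : ℂ)) ∈ UK K :=
  mem_UK.2 fun σ hσ => f.2 σ hσ t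

/-! ### Loop spaces and induced maps on homotopy groups -/

/-- The loop space `Ω X = Map*(S¹, X)` with `S¹ = ℝ ∪ {∞}` (the one-point
compactification of `ℝ`), based at `x₀`. -/
def Loop (X : Type*) [TopologicalSpace X] (x₀ : X) : Type _ :=
  {γ : C(OnePoint ℝ, X) // γ OnePoint.infty = x₀}

instance {X : Type*} [TopologicalSpace X] (x₀ : X) : TopologicalSpace (Loop X x₀) :=
  instTopologicalSpaceSubtype

/-- The constant loop, base point of `Ω X`. -/
def Loop.const {X : Type*} [TopologicalSpace X] (x₀ : X) : Loop X x₀ :=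
  ⟨ContinuousMap.const _ x₀, rfl⟩

/-- A based continuous map induces a continuous map of loop spaces. -/
def loopMap {X Y : Type*} [TopologicalSpace X] [TopologicalSpace Y] {x₀ : X} {y₀ : Y}
    (f : C(X, Y)) (hf : f x₀ = y₀) : C(Loop X x₀, Loop Y y₀) where
  toFun γ := ⟨f.comp γ.1, by simp [γ.2, hf]⟩
  continuous_toFun := by
    apply Continuous.subtype_mk
    exact (ContinuousMap.continuous_postcomp f).comp continuous_subtype_val

/-- The map induced by a continuous map on homotopy groups (`π_q`). -/
def piMap (q : ℕ) {X Y : Type*} [TopologicalSpace X] [TopologicalSpace Y]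
    (f : C(X, Y)) (x : X) :
    HomotopyGroup (Fin q) X x → HomotopyGroup (Fin q) Y (f x) :=
  Quotient.map
    (fun p => ⟨f.comp p.1, fun y hy => by
      show f (p.1 y) = f x
      rw [p.2 y hy]⟩)
    (fun p₁ p₂ h => h.elim fun H => ⟨H.compContinuousMap f⟩)

/-- `f` is a homotopy equivalence through dimension `d`: it induces isomorphisms on
`π_k` for all `k ≤ d` (at every base point). -/
def HomotopyEquivThrough {X Y : Type*} [TopologicalSpace X] [TopologicalSpace Y]
    (f : C(X, Y)) (d : ℤ) : Prop :=
  ∀ (x : X) (k : ℕ), (k : ℤ) ≤ d → Function.Bijective (piMap k f x)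

/-- A genuine homotopy equivalence. -/
def IsHtpyEquiv {X Y : Type*} [TopologicalSpace X] [TopologicalSpace Y]
    (f : C(X, Y)) : Prop :=
  ∃ g : C(Y, X), (f.comp g).Homotopic (ContinuousMap.id Y) ∧
    (g.comp f).Homotopic (ContinuousMap.id X)

/-! ### `i_D`, lifts, and stabilization maps -/

/-- `j : Pol*_D → Ω U(K_Σ)` is a lift of `i_D` through `Ω q_Σ`, i.e. `Ω q_Σ ∘ j = i_D`:
for every tuple `f` and real `t`, the loop `j f` at time `t` lies over the point
`[f_1(t), …, f_r(t)]` of `X_Σ` (and at `∞` over `[1,…,1]`, automatically). -/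
def IsLiftOfID {n r : ℕ} (N : Fin r → Fin n → ℤ) (K : Set (Finset (Fin r)))
    (hE : (∅ : Finset (Fin r)) ∈ K) (D : Fin r → ℕ)
    (j : ↥(PolSp K D) → Loop ↥(UK K) (onesUK hE)) : Prop :=
  ∀ (f : ↥(PolSp K D)) (t : ℝ),
    qmap N K ((j f).1 (t : OnePoint ℝ)) =
      qmap N K ⟨fun k => (toPoly (f.1 k)).eval (t : ℂ), polEval_mem_UK f t⟩

/-- `i : Pol*_D → Ω X_Σ` is the map `i_D` given by evaluation. -/
def IsID {n r : ℕ} (N : Fin r → Fin n → ℤ) (K : Set (Finset (Fin r)))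
    (hE : (∅ : Finset (Fin r)) ∈ K) (D : Fin r → ℕ)
    (i : ↥(PolSp K D) → Loop (XS N K) (baseX N K hE)) : Prop :=
  ∀ (f : ↥(PolSp K D)) (t : ℝ),
    (i f).1 (t : OnePoint ℝ) =
      qmap N K ⟨fun k => (toPoly (f.1 k)).eval (t : ℂ), polEval_mem_UK f t⟩

/-- `φ` is an admissible parameter for the stabilization maps: a homeomorphism of `ℂ`
onto the half plane `{Re < bound}` carrying `ℝ` onto `(-∞, bound)`. -/
def AdmissiblePhi (bound : ℝ) (φ : ℂ → ℂ) : Prop :=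
  Continuous φ ∧ Function.Injective φ ∧ IsOpenMap φ ∧
    Set.range φ = {w : ℂ | w.re < bound} ∧
    φ '' {z : ℂ | z.im = 0} = {z : ℂ | z.im = 0 ∧ z.re < bound}

/-- The defining property of the stabilization map
`s_{D,D'}(f)_k = φ(f_k) · (z - x_k)^{d'_k - d_k}`, where `φ(f)` denotes the monic
polynomial whose roots are the images under `φ` of the roots of `f`. -/
def StabSpec {r : ℕ} (K : Set (Finset (Fin r))) (φ : ℂ → ℂ) (xpt : Fin r → ℂ)
    (D D' : Fin r → ℕ) (s : ↥(PolSp K D) → ↥(PolSp K D')) : Prop :=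
  ∀ (f : ↥(PolSp K D)) (k : Fin r),
    toPoly ((s f).1 k) =
      (((toPoly (f.1 k)).roots.map φ).map
        fun α => Polynomial.X - Polynomial.C α).prod
        * (Polynomial.X - Polynomial.C (xpt k)) ^ (D' k - D k)

/-- The general defining property of the map `j_D : Pol*_D → Ω U(K_Σ)`:
when `∑ d_k n_k = 0` it is a lift of `i_D` through `Ω q_Σ`, and otherwise it is the
composite `j_{D₀} ∘ s_{D,D₀}` for a suitable `D₀ = m₀ D*` as in condition (2.9.1). -/
def IsJD {n r : ℕ} (N : Fin r → Fin n → ℤ) (K : Set (Finset (Fin r)))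
    (hE : (∅ : Finset (Fin r)) ∈ K) (D : Fin r → ℕ)
    (j : C(↥(PolSp K D), Loop ↥(UK K) (onesUK hE))) : Prop :=
  ((∑ k, (D k : ℤ) • N k = 0) ∧ IsLiftOfID N K hE D j) ∨
  ((∑ k, (D k : ℤ) • N k ≠ 0) ∧
    ∃ (dstar : Fin r → ℕ) (m₀ : ℕ),
      (∀ k, 0 < dstar k) ∧ (∑ k, (dstar k : ℤ) • N k = 0) ∧
      (∀ k, D k < m₀ * dstar k) ∧
      ∃ (φ : ℂ → ℂ) (xpt : Fin r → ℂ),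
        AdmissiblePhi ((∑ k, D k : ℕ) : ℝ) φ ∧
        (∀ k, ((∑ k, D k : ℕ) : ℝ) < (xpt k).re) ∧ Function.Injective xpt ∧
        ∃ (j₀ : C(↥(PolSp K fun k => m₀ * dstar k), Loop ↥(UK K) (onesUK hE)))
          (s₀ : C(↥(PolSp K D), ↥(PolSp K fun k => m₀ * dstar k))),
          IsLiftOfID N K hE _ j₀ ∧ StabSpec K φ xpt D _ s₀ ∧ j = j₀.comp s₀)

/-! ### Stabilized (colimit) spaces -/

/-- The multidegree `D + t·e`. -/
def Dt {r : ℕ} (D : Fin r → ℕ) (t : ℕ) : Fin r → ℕ := fun k => D k + t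

/-- Carrier of the stabilized space: the disjoint union of the `Pol*_{D+te}`. -/
def ColCar {r : ℕ} (K : Set (Finset (Fin r))) (D : Fin r → ℕ) : Type :=
  Σ t : ℕ, ↥(PolSp K (Dt D t))

instance {r : ℕ} (K : Set (Finset (Fin r))) (D : Fin r → ℕ) :
    TopologicalSpace (ColCar K D) := by
  unfold ColCar; infer_instance

/-- The identifications generating the colimit along the stabilization maps. -/
def ColRel {r : ℕ} (K : Set (Finset (Fin r))) (D : Fin r → ℕ)
    (s : ∀ t : ℕ, ↥(PolSp K (Dt D t)) → ↥(PolSp K (Dt D (t + 1)))) :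
    ColCar K D → ColCar K D → Prop :=
  fun a b => b = ⟨a.1 + 1, s a.1 a.2⟩

/-- The stabilized space `Pol^Σ_{D+∞} = colim_t Pol*_{D+te}(S¹, X_Σ)`. -/
def PolColim {r : ℕ} (K : Set (Finset (Fin r))) (D : Fin r → ℕ)
    (s : ∀ t : ℕ, ↥(PolSp K (Dt D t)) → ↥(PolSp K (Dt D (t + 1)))) : Type :=
  Quot (ColRel K D s)

instance {r : ℕ} (K : Set (Finset (Fin r))) (D : Fin r → ℕ)
    (s : ∀ t : ℕ, ↥(PolSp K (Dt D t)) → ↥(PolSp K (Dt D (t + 1)))) :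
    TopologicalSpace (PolColim K D s) :=
  instTopologicalSpaceQuot

/-- Admissibility of a family of stabilization maps `s_{D+te}`. -/
def AdmissibleStabFamily {r : ℕ} (K : Set (Finset (Fin r))) (D : Fin r → ℕ)
    (s : ∀ t : ℕ, ↥(PolSp K (Dt D t)) → ↥(PolSp K (Dt D (t + 1)))) : Prop :=
  ∀ t : ℕ, ∃ (φ : ℂ → ℂ) (xpt : Fin r → ℂ),
    AdmissiblePhi ((∑ k, Dt D t k : ℕ) : ℝ) φ ∧
    (∀ k, ((∑ k, Dt D t k : ℕ) : ℝ) < (xpt k).re) ∧ Function.Injective xpt ∧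
    StabSpec K φ xpt (Dt D t) (Dt D (t + 1)) (s t)

/-!
Applying `φ` to roots identifies `Pol*_D` with its subspace of tuples whose roots lie in
`Re z < B`, and turns the stabilization map into multiplication of the `i`-th polynomial by `z - x`
there. It then suffices to show: a family in `Pol*_{D+e_i}` over a cube of dimension `< 2mρ`, with
`m = d_min` and `ρ = r_min - 1`, which over a closed set `S` is obtained in this way from a family
in `Pol*_D`, is homotopic rel `S` to one so obtained everywhere.

* Near `S`, push the root `x` of the `i`-th polynomial off the real axis; the other roots lie to
  the left of `x`, so no real root is created.
* Away from `S`, approximate the family by a generic one. By a dimension count, at every parameter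
  there are fewer than `m` real `t` at which `Re f_i` and at least `ρ` of the other `f_k` vanish.
* Adding `√-1 v` to `f_i`, for a real polynomial `v` of degree `≤ d_i`, keeps the tuple admissible
  as long as `|v| < |Im f_i|` at these critical `t`. Such `v` form a convex set, and since there
  are fewer than `m ≤ d_i` conditions some of them make `f_i + √-1 v` vanish at a nonreal `y`. A
  partition of unity selects such `v` continuously in the parameter.
* Now divide `f_i` by `z - y`, which leaves a tuple in `Pol*_D`. As long as the factor `z - y` has
  a nonreal root, the roots of this tuple may be translated freely: move them into `Re z < B`, and
  only then move `y` back to `x`.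
-/

open Polynomial Topology

section Coefficientwise

variable {P R : Type*} [CommRing R] {A : Subring (P → R)}

/-- The ring of families of polynomials all of whose coefficient functions lie in a given ring of
functions `A`: continuous families for `A = continuousSubring P R`, `C¹` families for
`A = contDiffSubring E`. -/
def coeffwise (A : Subring (P → R)) : Subring (P → R[X]) where
  carrier := {q | ∀ n, (fun p => (q p).coeff n) ∈ A}
  zero_mem' _ := A.zero_mem
  one_mem' n := by
    simp only [Pi.one_apply, coeff_one]
    split_ifs
    exacts [A.one_mem, A.zero_mem]
  add_mem' hq hq' n := A.add_mem (hq n) (hq' n)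
  neg_mem' hq n := by
    simp only [Pi.neg_apply, coeff_neg]
    exact A.neg_mem (hq n)
  mul_mem' {q q'} hq hq' n := by
    have h : (fun p => ((q * q') p).coeff n) = ∑ x ∈ Finset.HasAntidiagonal.antidiagonal n,
        (fun p => (q p).coeff x.1) * fun p => (q' p).coeff x.2 := by
      ext p
      simp [coeff_mul]
    rw [h]
    exact A.sum_mem fun x _ => A.mul_mem (hq _) (hq' _)

lemma X_mem_coeffwise : (fun _ => X : P → R[X]) ∈ coeffwise A := fun n => by
  simp only [coeff_X]
  split_ifs
  exacts [A.one_mem, A.zero_mem]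

lemma C_mem_coeffwise {u : P → R} (hu : u ∈ A) : (fun p => C (u p)) ∈ coeffwise A := fun n => by
  simp only [coeff_C]
  split_ifs
  exacts [hu, A.zero_mem]

lemma X_sub_C_mem_coeffwise {u : P → R} (hu : u ∈ A) : (fun p => X - C (u p)) ∈ coeffwise A :=
  (coeffwise A).sub_mem X_mem_coeffwise (C_mem_coeffwise hu)

lemma prod_X_sub_C_mem_coeffwise {ι : Type*} {s : Finset ι} {u : ι → P → R}
    (hu : ∀ l ∈ s, u l ∈ A) : (fun p => ∏ l ∈ s, (X - C (u l p))) ∈ coeffwise A := by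
  have h := (coeffwise A).prod_mem fun l hl => X_sub_C_mem_coeffwise (hu l hl)
  rwa [Finset.prod_fn] at h

lemma eval_mem_of_mem_coeffwise {q : P → R[X]} (hq : q ∈ coeffwise A) {d : ℕ}
    (hd : ∀ p, (q p).natDegree ≤ d) {u : P → R} (hu : u ∈ A) : (fun p => (q p).eval (u p)) ∈ A := by
  have h : (fun p => (q p).eval (u p)) =
      ∑ n ∈ Finset.range (d + 1), (fun p => (q p).coeff n) * u ^ n := by
    ext p
    simp [eval_eq_sum_range' (Nat.lt_succ_of_le (hd p))]
  rw [h]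
  exact A.sum_mem fun n _ => A.mul_mem (hq n) (A.pow_mem hu n)

lemma divByMonic_mem_coeffwise {q : P → R[X]} (hq : q ∈ coeffwise A) {d : ℕ}
    (hd : ∀ p, (q p).natDegree = d) {u : P → R} (hu : u ∈ A) :
    (fun p => q p /ₘ (X - C (u p))) ∈ coeffwise A := fun n => by
  have h : (fun p => (q p /ₘ (X - C (u p))).coeff n) =
      ∑ l ∈ Finset.Icc (n + 1) d, u ^ (l - (n + 1)) * fun p => (q p).coeff l := by
    ext p
    simp [coeff_divByMonic_X_sub_C, hd]
  rw [h]
  exact A.sum_mem fun l _ => A.mul_mem (A.pow_mem hu _) (hq l)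

lemma taylor_mem_coeffwise {q : P → R[X]} (hq : q ∈ coeffwise A) {d : ℕ}
    (hd : ∀ p, (q p).natDegree ≤ d) {u : P → R} (hu : u ∈ A) :
    (fun p => taylor (u p) (q p)) ∈ coeffwise A := by
  have h : (fun p => taylor (u p) (q p)) = ∑ n ∈ Finset.range (d + 1),
      (fun p => C ((q p).coeff n)) * ((fun _ => X) + fun p => C (u p)) ^ n := by
    ext1 p
    simp [taylor_apply, comp_eq_sum_left, sum_over_range' _ _ _ (Nat.lt_succ_of_le (hd p))]
  rw [h]
  exact (coeffwise A).sum_mem fun n _ => (coeffwise A).mul_mem (C_mem_coeffwise (hq n))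
    ((coeffwise A).pow_mem ((coeffwise A).add_mem X_mem_coeffwise (C_mem_coeffwise hu)) n)

end Coefficientwise

section LowPoly

variable {R : Type*} [CommRing R] {d : ℕ}

/-- The polynomial of degree less than `d` with prescribed coefficients. -/
def lowPoly : (Fin d → R) →ₗ[R] R[X] :=
  (degreeLT R d).subtype ∘ₗ (degreeLTEquiv R d).symm

lemma degree_lowPoly_lt (a : Fin d → R) : (lowPoly a).degree < d :=
  mem_degreeLT.1 ((degreeLTEquiv R d).symm a).2

lemma coeff_lowPoly (a : Fin d → R) (n : Fin d) : (lowPoly a).coeff n = a n :=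
  congrFun ((degreeLTEquiv R d).apply_symm_apply a) n

lemma lowPoly_apply (a : Fin d → R) : lowPoly a = ∑ n, C (a n) * X ^ (n : ℕ) := by
  simp_rw [C_mul_X_pow_eq_monomial]
  rfl

/-- The coefficients of a polynomial in degrees less than `d`. -/
def coeffVec (d : ℕ) (q : R[X]) : Fin d → R := fun n => q.coeff n

lemma lowPoly_coeffVec {q : R[X]} (hq : q.degree < d) : lowPoly (coeffVec d q) = q :=
  congrArg Subtype.val ((degreeLTEquiv R d).symm_apply_apply ⟨q, mem_degreeLT.2 hq⟩)

lemma lowPoly_mem_coeffwise {P : Type*} {A : Subring (P → R)} {a : P → Fin d → R}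
    (ha : ∀ n, (fun p => a p n) ∈ A) : (fun p => lowPoly (a p)) ∈ coeffwise A := by
  intro n
  rcases lt_or_ge n d with hn | hn
  · simpa only [coeff_lowPoly (n := ⟨n, hn⟩)] using ha ⟨n, hn⟩
  · have h (p : P) : (lowPoly (a p)).coeff n = 0 := coeff_eq_zero_of_degree_lt
      ((degree_lowPoly_lt _).trans_le (by exact_mod_cast hn))
    simp only [h]
    exact A.zero_mem

end LowPoly

section MonicPolynomials

variable {d : ℕ}

lemma toPoly_eq (a : Fin d → ℂ) : toPoly a = X ^ d + lowPoly a := by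
  rw [lowPoly_apply, toPoly]

lemma monic_toPoly (a : Fin d → ℂ) : (toPoly a).Monic := by
  rw [toPoly_eq]
  exact monic_X_pow_add (degree_lowPoly_lt a)

lemma natDegree_toPoly (a : Fin d → ℂ) : (toPoly a).natDegree = d := by
  rw [toPoly_eq, natDegree_add_eq_left_of_degree_lt] <;>
    simp [degree_lowPoly_lt]

lemma coeffVec_toPoly (a : Fin d → ℂ) : coeffVec d (toPoly a) = a := by
  ext n
  rw [coeffVec, toPoly_eq, coeff_add, coeff_X_pow, if_neg n.2.ne, zero_add, coeff_lowPoly]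

lemma toPoly_injective : Function.Injective (toPoly : (Fin d → ℂ) → ℂ[X]) :=
  Function.LeftInverse.injective coeffVec_toPoly

lemma toPoly_coeffVec {q : ℂ[X]} (hq : q.Monic) (hd : q.natDegree = d) :
    toPoly (coeffVec d q) = q := by
  subst hd
  have h : q = X ^ q.natDegree + q.eraseLead := by
    conv_lhs => rw [← q.eraseLead_add_C_mul_X_pow, hq.leadingCoeff, C_1, one_mul, add_comm]
  have hlt : q.eraseLead.degree < q.natDegree :=
    (degree_eraseLead_lt hq.ne_zero).trans_le degree_le_natDegree
  have hc : coeffVec q.natDegree q = coeffVec q.natDegree q.eraseLead := by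
    ext n
    rw [coeffVec, coeffVec, eraseLead_coeff_of_ne _ n.2.ne]
  rw [toPoly_eq, hc, lowPoly_coeffVec hlt, ← h]

lemma toPoly_add (a b : Fin d → ℂ) : toPoly (a + b) = toPoly a + lowPoly b := by
  rw [toPoly_eq, toPoly_eq, map_add, add_assoc]

lemma norm_le_of_isRoot_toPoly {a : Fin d → ℂ} {z : ℂ} (hz : (toPoly a).IsRoot z) :
    ‖z‖ ≤ ‖a‖ + 1 := by
  have hbound : cauchyBound (toPoly a) ≤ ‖a‖₊ + 1 := by
    rw [cauchyBound, (monic_toPoly a).leadingCoeff, nnnorm_one, div_one]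
    refine add_le_add_left (Finset.sup_le fun n hn => ?_) 1
    rw [Finset.mem_range, natDegree_toPoly] at hn
    calc ‖(toPoly a).coeff n‖₊ = ‖a ⟨n, hn⟩‖₊ := by rw [← congrFun (coeffVec_toPoly a) ⟨n, hn⟩]; rfl
      _ ≤ ‖a‖₊ := nnnorm_le_pi_nnnorm a _
  exact_mod_cast ((hz.norm_lt_cauchyBound (monic_toPoly a).ne_zero).trans_le hbound).le

variable {P : Type*} [TopologicalSpace P]

lemma toPoly_mem_coeffwise {a : P → Fin d → ℂ} (ha : Continuous a) :
    (fun p => toPoly (a p)) ∈ coeffwise (continuousSubring P ℂ) := by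
  simp only [toPoly_eq]
  exact Subring.add_mem _ (Subring.pow_mem _ X_mem_coeffwise d)
    (lowPoly_mem_coeffwise (continuous_pi_iff.1 ha))

lemma continuous_coeffVec {q : P → ℂ[X]} (hq : q ∈ coeffwise (continuousSubring P ℂ)) :
    Continuous fun p => coeffVec d (q p) :=
  continuous_pi fun n => hq n

lemma continuous_eval_toPoly {a : P → Fin d → ℂ} (ha : Continuous a) {u : P → ℂ}
    (hu : Continuous u) : Continuous fun p => (toPoly (a p)).eval (u p) :=
  eval_mem_of_mem_coeffwise (toPoly_mem_coeffwise ha) (fun p => (natDegree_toPoly (a p)).le) hu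

end MonicPolynomials

section MovingRoots

variable {d : ℕ}

/-- The coefficients of the monic polynomial with prescribed roots (the Vieta map). -/
def ofRoots (α : Fin d → ℂ) : Fin d → ℂ := coeffVec d (∏ j, (X - C (α j)))

/-- The coefficients of the monic polynomial whose roots are the images under `θ` of the roots of
`toPoly a`. -/
def mapRoots (θ : ℂ → ℂ) (a : Fin d → ℂ) : Fin d → ℂ :=
  coeffVec d (((toPoly a).roots.map θ).map fun α => X - C α).prod

lemma mem_roots_toPoly {a : Fin d → ℂ} {z : ℂ} : z ∈ (toPoly a).roots ↔ (toPoly a).IsRoot z :=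
  mem_roots (monic_toPoly a).ne_zero

lemma toPoly_ofRoots (α : Fin d → ℂ) : toPoly (ofRoots α) = ∏ j, (X - C (α j)) :=
  toPoly_coeffVec (monic_prod_of_monic _ _ fun _ _ => monic_X_sub_C _)
    ((natDegree_prod_of_monic _ _ fun _ _ => monic_X_sub_C _).trans (by simp))

lemma roots_toPoly_ofRoots (α : Fin d → ℂ) :
    (toPoly (ofRoots α)).roots = Finset.univ.val.map α := by
  rw [toPoly_ofRoots, ← roots_multiset_prod_X_sub_C (Finset.univ.val.map α), Multiset.map_map]
  rfl

lemma isRoot_toPoly_ofRoots (α : Fin d → ℂ) (j : Fin d) : (toPoly (ofRoots α)).IsRoot (α j) := by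
  rw [toPoly_ofRoots, IsRoot, eval_prod]
  exact Finset.prod_eq_zero (Finset.mem_univ j) (by simp)

lemma eq_of_roots_toPoly_eq {a b : Fin d → ℂ} (h : (toPoly a).roots = (toPoly b).roots) :
    a = b := by
  apply toPoly_injective
  rw [(IsAlgClosed.splits (toPoly a)).eq_prod_roots_of_monic (monic_toPoly a), h,
    ← (IsAlgClosed.splits (toPoly b)).eq_prod_roots_of_monic (monic_toPoly b)]

lemma continuous_ofRoots : Continuous (ofRoots : (Fin d → ℂ) → Fin d → ℂ) :=
  continuous_coeffVec (prod_X_sub_C_mem_coeffwise fun j _ => continuous_apply j)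

lemma card_roots_toPoly (a : Fin d → ℂ) : (toPoly a).roots.card = d := by
  rw [IsAlgClosed.card_roots_eq_natDegree, natDegree_toPoly]

lemma surjective_ofRoots : Function.Surjective (ofRoots : (Fin d → ℂ) → Fin d → ℂ) := by
  intro a
  have hlen : (toPoly a).roots.toList.length = d := by
    rw [Multiset.length_toList, card_roots_toPoly]
  refine ⟨fun j => (toPoly a).roots.toList.get (j.cast hlen.symm), eq_of_roots_toPoly_eq ?_⟩
  rw [roots_toPoly_ofRoots, Fin.univ_val_map, ← List.ofFn_congr hlen, List.ofFn_get,
    Multiset.coe_toList]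

lemma isClosedMap_ofRoots : IsClosedMap (ofRoots : (Fin d → ℂ) → Fin d → ℂ) := by
  refine (isProperMap_iff_tendsto_cocompact.2 ⟨continuous_ofRoots, ?_⟩).isClosedMap
  rw [← Metric.cobounded_eq_cocompact, ← tendsto_norm_atTop_iff_cobounded]
  refine Filter.tendsto_atTop_mono (fun α : Fin d → ℂ => ?_)
    (Filter.tendsto_atTop_add_const_right _ (-1) tendsto_norm_cobounded_atTop)
  have hα : ‖α‖ ≤ ‖ofRoots α‖ + 1 := (pi_norm_le_iff_of_nonneg (by positivity)).2 fun j =>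
    norm_le_of_isRoot_toPoly (isRoot_toPoly_ofRoots α j)
  linarith

lemma isOpen_setOf_forall_isRoot_mem {U : Set ℂ} (hU : IsOpen U) :
    IsOpen {a : Fin d → ℂ | ∀ z, (toPoly a).IsRoot z → z ∈ U} := by
  have hpre : IsClosed {α : Fin d → ℂ | ∃ j, α j ∈ Uᶜ} := by
    simp only [Set.ofPred_exists]
    exact isClosed_iUnion_of_finite fun j => hU.isClosed_compl.preimage (continuous_apply j)
  convert (isClosedMap_ofRoots _ hpre).isOpen_compl using 1
  ext a
  constructor
  · rintro h ⟨α, ⟨j, hj⟩, rfl⟩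
    exact hj (h _ (isRoot_toPoly_ofRoots α j))
  · intro h z hz
    by_contra hzU
    obtain ⟨α, rfl⟩ := surjective_ofRoots a
    rw [← mem_roots_toPoly, roots_toPoly_ofRoots, Multiset.mem_map] at hz
    obtain ⟨j, -, rfl⟩ := hz
    exact h ⟨α, ⟨j, hzU⟩, rfl⟩

lemma toPoly_mapRoots (θ : ℂ → ℂ) (a : Fin d → ℂ) :
    toPoly (mapRoots θ a) = (((toPoly a).roots.map θ).map fun α => X - C α).prod :=
  toPoly_coeffVec (monic_multiset_prod_of_monic _ _ fun _ _ => monic_X_sub_C _) <| by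
    rw [natDegree_multiset_prod_X_sub_C_eq_card, Multiset.card_map, card_roots_toPoly]

lemma roots_toPoly_mapRoots (θ : ℂ → ℂ) (a : Fin d → ℂ) :
    (toPoly (mapRoots θ a)).roots = (toPoly a).roots.map θ := by
  rw [toPoly_mapRoots, roots_multiset_prod_X_sub_C]

lemma isRoot_toPoly_mapRoots {θ : ℂ → ℂ} {a : Fin d → ℂ} {w : ℂ} :
    (toPoly (mapRoots θ a)).IsRoot w ↔ ∃ z, (toPoly a).IsRoot z ∧ θ z = w := by
  simp_rw [← mem_roots_toPoly, roots_toPoly_mapRoots, Multiset.mem_map]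

lemma mapRoots_mapRoots_eq_self {θ η : ℂ → ℂ} {a : Fin d → ℂ}
    (h : ∀ z, (toPoly a).IsRoot z → η (θ z) = z) : mapRoots η (mapRoots θ a) = a := by
  apply eq_of_roots_toPoly_eq
  rw [roots_toPoly_mapRoots, roots_toPoly_mapRoots, Multiset.map_map]
  exact (Multiset.map_congr rfl fun z hz => h z (mem_roots_toPoly.1 hz)).trans (Multiset.map_id _)

lemma mapRoots_ofRoots (θ : ℂ → ℂ) (α : Fin d → ℂ) :
    mapRoots θ (ofRoots α) = ofRoots (θ ∘ α) := by
  apply eq_of_roots_toPoly_eq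
  rw [roots_toPoly_mapRoots, roots_toPoly_ofRoots, roots_toPoly_ofRoots, Multiset.map_map]

/-- The Vieta map is closed, hence a quotient map, and upstairs `mapRoots θ` is composition
with `θ`. -/
lemma continuousOn_mapRoots {U : Set ℂ} {θ : ℂ → ℂ} (hθ : ContinuousOn θ U) :
    ContinuousOn (mapRoots θ) {a : Fin d → ℂ | ∀ z, (toPoly a).IsRoot z → z ∈ U} := by
  set W := {a : Fin d → ℂ | ∀ z, (toPoly a).IsRoot z → z ∈ U}
  have hquot : Topology.IsQuotientMap (W.restrictPreimage ofRoots) :=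
    (isClosedMap_ofRoots.restrictPreimage W).isQuotientMap
      (continuous_ofRoots.restrictPreimage) (surjective_ofRoots.restrictPreimage W)
  rw [continuousOn_iff_continuous_domRestrict, hquot.continuous_iff]
  have hlift : W.domRestrict (mapRoots θ) ∘ W.restrictPreimage ofRoots =
      fun α => ofRoots (θ ∘ α.1) := funext fun α => mapRoots_ofRoots θ α.1
  rw [hlift]
  exact continuous_ofRoots.comp <| continuous_pi fun j =>
    hθ.comp_continuous ((continuous_apply j).comp continuous_subtype_val) fun α =>
      α.2 _ (isRoot_toPoly_ofRoots α.1 j)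

end MovingRoots

section PolSp

variable {r : ℕ} {K : Set (Finset (Fin r))} {D : Fin r → ℕ}

/-- Tuples of coefficient vectors of monic polynomials of multidegree `D`, the ambient space of
`PolSp K D`. -/
abbrev Coeffs (D : Fin r → ℕ) : Type := ∀ k, Fin (D k) → ℂ

lemma isOpen_PolSp : IsOpen (PolSp K D) := by
  have hInter : PolSp K D = ⋂ σ : Finset (Fin r), {f | σ ∉ K → ∀ t : ℝ,
      ∃ k ∈ σ, (toPoly (f k)).eval (t : ℂ) ≠ 0} := by
    ext f
    simp [PolSp]
  rw [hInter]
  refine isOpen_iInter_of_finite fun σ => isOpen_iff_eventually.2 fun f hf => ?_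
  by_cases hσ : σ ∈ K
  · exact Filter.Eventually.of_forall fun g h => absurd hσ h
  obtain ⟨k₀, hk₀, -⟩ := hf hσ 0
  have hcompact : ∀ᶠ g in 𝓝 f, ∀ t ∈ Set.Icc (-(‖f k₀‖ + 2)) (‖f k₀‖ + 2),
      ∃ k ∈ σ, (toPoly (g k)).eval (t : ℂ) ≠ 0 := by
    refine isCompact_Icc.eventually_forall_of_forall_eventually fun t _ => ?_
    obtain ⟨k, hk, hne⟩ := hf hσ t
    have hcont : Continuous fun x : Coeffs D × ℝ => (toPoly (x.1 k)).eval (x.2 : ℂ) :=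
      continuous_eval_toPoly (by fun_prop) (by fun_prop)
    exact (hcont.continuousAt.eventually_ne (x := (f, t)) hne).mono fun x hx => ⟨k, hk, hx⟩
  have hnorm : ∀ᶠ g : Coeffs D in 𝓝 f, ‖g k₀‖ < ‖f k₀‖ + 1 :=
    (continuous_apply k₀).norm.continuousAt.eventually_lt continuousAt_const (by simp)
  filter_upwards [hcompact, hnorm] with g hg hgk₀ _ t
  by_cases ht : t ∈ Set.Icc (-(‖f k₀‖ + 2)) (‖f k₀‖ + 2)
  · exact hg t ht
  · refine ⟨k₀, hk₀, fun hroot => ht (abs_le.1 ?_)⟩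
    have hbound := norm_le_of_isRoot_toPoly hroot
    rw [Complex.norm_real, Real.norm_eq_abs] at hbound
    linarith

end PolSp

section LeadPoly

variable {R : Type*} [CommRing R] {d : ℕ}

/-- The polynomial of degree at most `d` with coefficient `b` in degree `d` and lower coefficients
`a`. Real parts of monic polynomials have this form with `b = 1`, imaginary parts with `b = 0`. -/
def leadPoly (b : R) (a : Fin d → R) : R[X] := C b * X ^ d + lowPoly a

lemma coeff_leadPoly_of_lt (b : R) (a : Fin d → R) (n : Fin d) : (leadPoly b a).coeff n = a n := by
  rw [leadPoly, coeff_add, coeff_C_mul_X_pow, if_neg n.2.ne, zero_add, coeff_lowPoly]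

lemma coeff_leadPoly_self (b : R) (a : Fin d → R) : (leadPoly b a).coeff d = b := by
  rw [leadPoly, coeff_add, coeff_C_mul_X_pow, if_pos rfl,
    coeff_eq_zero_of_degree_lt (degree_lowPoly_lt a), add_zero]

lemma natDegree_leadPoly_le (b : R) (a : Fin d → R) : (leadPoly b a).natDegree ≤ d :=
  natDegree_add_le_of_degree_le (natDegree_C_mul_X_pow_le b d)
    (natDegree_le_of_degree_le (degree_lowPoly_lt a).le)

lemma leadPoly_coeffVec {q : R[X]} (hq : q.natDegree ≤ d) :
    leadPoly (q.coeff d) (coeffVec d q) = q := by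
  ext n
  rcases lt_trichotomy n d with hn | rfl | hn
  · exact coeff_leadPoly_of_lt _ _ ⟨n, hn⟩
  · exact coeff_leadPoly_self _ _
  · rw [coeff_eq_zero_of_natDegree_lt ((natDegree_leadPoly_le _ _).trans_lt hn),
      coeff_eq_zero_of_natDegree_lt (hq.trans_lt hn)]

lemma exists_leadPoly_eq_prod_mul [IsDomain R] {ι : Type*} {s : Finset ι} {t : ι → R}
    (ht : ∀ l ∈ s, ∀ l' ∈ s, l ≠ l' → IsUnit (t l - t l')) {b : R} {a : Fin d → R} {e : ℕ}
    (he : s.card + e = d) (hroot : ∀ l ∈ s, (leadPoly b a).IsRoot (t l)) :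
    ∃ c : Fin e → R, leadPoly b a = (∏ l ∈ s, (X - C (t l))) * leadPoly b c := by
  have hmonic : (∏ l ∈ s, (X - C (t l))).Monic := monic_prod_of_monic _ _ fun _ _ => monic_X_sub_C _
  have hdeg : (∏ l ∈ s, (X - C (t l))).natDegree = s.card := by
    rw [natDegree_prod_of_monic _ _ fun _ _ => monic_X_sub_C _]
    simp
  obtain ⟨q, hq⟩ : (∏ l ∈ s, (X - C (t l))) ∣ leadPoly b a :=
    Finset.prod_dvd_of_coprime
      (fun l hl l' hl' hne => isCoprime_X_sub_C_of_isUnit_sub (ht l hl l' hl' hne))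
      fun l hl => dvd_iff_isRoot.2 (hroot l hl)
  have hqe : q.natDegree ≤ e := by
    rcases eq_or_ne q 0 with rfl | hq0
    · simp
    · have hsum := hmonic.natDegree_mul' hq0
      have hle := natDegree_leadPoly_le b a
      rw [← hq, hdeg] at hsum
      lia
  have hlead : q.coeff e = b := by
    rw [← coeff_leadPoly_self b a, hq, ← he, coeff_mul_add_eq_of_natDegree_le hdeg.le hqe, ← hdeg,
      hmonic.coeff_natDegree, one_mul]
  exact ⟨coeffVec e q, by rw [hq, ← hlead, leadPoly_coeffVec hqe]⟩

lemma leadPoly_mem_coeffwise {P : Type*} {A : Subring (P → R)} {b : R} (hb : (fun _ => b) ∈ A)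
    {a : P → Fin d → R} (ha : ∀ n, (fun p => a p n) ∈ A) :
    (fun p => leadPoly b (a p)) ∈ coeffwise A :=
  Subring.add_mem _ (Subring.mul_mem _ (C_mem_coeffwise hb) (Subring.pow_mem _ X_mem_coeffwise d))
    (lowPoly_mem_coeffwise ha)

lemma toPoly_eval_ofReal (a : Fin d → ℂ) (t : ℝ) : (toPoly a).eval (t : ℂ) =
    ⟨(leadPoly 1 fun n => (a n).re).eval t, (leadPoly 0 fun n => (a n).im).eval t⟩ := by
  have hpow (n : ℕ) : (t : ℂ) ^ n = ((t ^ n : ℝ) : ℂ) := by push_cast; rfl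
  simp only [toPoly, leadPoly, lowPoly_apply, eval_add, eval_finsetSum, eval_mul, eval_C, eval_pow,
    eval_X, hpow, one_mul, zero_mul, zero_add]
  apply Complex.ext <;> simp [Complex.re_sum, Complex.im_sum, -Complex.ofReal_pow]

end LeadPoly

section Genericity

lemma exists_injective_of_le_encard {α : Type*} {s : Set α} {m : ℕ} (h : (m : ℕ∞) ≤ s.encard) :
    ∃ t : Fin m → α, Function.Injective t ∧ ∀ l, t l ∈ s := by
  obtain ⟨u, hu, hcard⟩ := Set.exists_subset_encard_eq h
  have hfin : u.Finite := Set.finite_of_encard_eq_coe hcard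
  have := hfin.to_subtype
  have e : u ≃ Fin m := Finite.equivFinOfCardEq <| by
    rw [Nat.card_coe_set_eq, Set.ncard, hcard, ENat.toNat_natCast]
  exact ⟨fun l => e.symm l, Subtype.val_injective.comp e.symm.injective, fun l => hu (e.symm l).2⟩

/-- The ring of real `C¹` functions. -/
def contDiffSubring (E : Type*) [NormedAddCommGroup E] [NormedSpace ℝ E] : Subring (E → ℝ) where
  carrier := {u | ContDiff ℝ 1 u}
  zero_mem' := (contDiff_const : ContDiff ℝ 1 fun _ : E => (0 : ℝ))
  one_mem' := (contDiff_const : ContDiff ℝ 1 fun _ : E => (1 : ℝ))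
  add_mem' {u v} (hu : ContDiff ℝ 1 u) (hv : ContDiff ℝ 1 v) := hu.add hv
  neg_mem' {u} (hu : ContDiff ℝ 1 u) := hu.neg
  mul_mem' {u v} (hu : ContDiff ℝ 1 u) (hv : ContDiff ℝ 1 v) := hu.mul hv

variable {J E : Type*} {d : J → ℕ} {m : ℕ}

/-- For index sets `S l ⊆ J`, the parameters `ω` for which some polynomial of the family
`h p + ω` has, for each `l`, a root at `t l` in all the coordinates `j ∈ S l`, are images of the
points of `E`, the `t l`, and the quotients by the linear factors: the map sends these data to the
product minus `h p`. -/
def commonRootsMap (b : J → ℝ) (h : E → ∀ j, Fin (d j) → ℝ) (S : Fin m → Finset J)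
    (x : E × (Fin m → ℝ) × ∀ j, Fin (d j - Finset.card {l | j ∈ S l}) → ℝ) :
    ∀ j, Fin (d j) → ℝ := fun j =>
  coeffVec (d j) ((∏ l with j ∈ S l, (X - C (x.2.1 l))) * leadPoly (b j) (x.2.2 j))
    - h x.1 j

lemma card_filter_le (S : Fin m → Finset J) (j : J) : Finset.card {l | j ∈ S l} ≤ m :=
  (Finset.card_le_univ _).trans_eq (Fintype.card_fin m)

lemma mem_range_commonRootsMap {b : J → ℝ} {h : E → ∀ j, Fin (d j) → ℝ} (hm : ∀ j, m ≤ d j)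
    {ω : ∀ j, Fin (d j) → ℝ} {p : E} {t : Fin m → ℝ} (ht : Function.Injective t)
    {S : Fin m → Finset J}
    (hroot : ∀ l, ∀ j ∈ S l, (leadPoly (b j) (h p j + ω j)).IsRoot (t l)) :
    ω ∈ Set.range (commonRootsMap b h S) := by
  have hfactor (j) : ∃ c : Fin (d j - Finset.card {l | j ∈ S l}) → ℝ,
      leadPoly (b j) (h p j + ω j) =
        (∏ l with j ∈ S l, (X - C (t l))) * leadPoly (b j) c :=
    exists_leadPoly_eq_prod_mul
      (fun l _ l' _ hne => (sub_ne_zero.2 fun heq => hne (ht heq)).isUnit)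
      (Nat.add_sub_cancel' ((card_filter_le S j).trans (hm j)))
      fun l hl => hroot l j (by simpa using hl)
  choose c hc using hfactor
  refine ⟨⟨p, t, c⟩, ?_⟩
  ext j n
  simp only [commonRootsMap, ← hc, Pi.sub_apply, coeffVec, coeff_leadPoly_of_lt, Pi.add_apply]
  ring

variable [NormedAddCommGroup E] [NormedSpace ℝ E] [Fintype J]

lemma contDiff_commonRootsMap (b : J → ℝ) {h : E → ∀ j, Fin (d j) → ℝ} (hh : ContDiff ℝ 1 h)
    (S : Fin m → Finset J) : ContDiff ℝ 1 (commonRootsMap b h S) := by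
  refine contDiff_pi.2 fun j => contDiff_pi.2 fun n => ContDiff.sub ?_ ?_
  · have hprod : (fun x : E × (Fin m → ℝ) × ∀ j, Fin (d j - Finset.card {l | j ∈ S l}) → ℝ =>
        ∏ l with j ∈ S l, (X - C (x.2.1 l))) ∈ coeffwise (contDiffSubring _) :=
      prod_X_sub_C_mem_coeffwise fun l _ => (by fun_prop : ContDiff ℝ 1 _)
    exact (coeffwise _).mul_mem hprod (leadPoly_mem_coeffwise (contDiff_const : ContDiff ℝ 1 _)
      (contDiff_pi.1 (contDiff_pi.1 (contDiff_snd.comp contDiff_snd) j) : ∀ n, ContDiff ℝ 1 _)) n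
  · exact (contDiff_pi.1 (contDiff_pi.1 hh j) n).comp contDiff_fst

variable [FiniteDimensional ℝ E] {s : ℕ}

lemma sum_card_filter_mem (S : Fin m → Finset J) :
    ∑ j, Finset.card {l | j ∈ S l} = ∑ l, (S l).card := by
  have h := Finset.sum_card_bipartiteAbove_eq_sum_card_bipartiteBelow
    (s := (Finset.univ : Finset J)) (t := (Finset.univ : Finset (Fin m))) fun j l => j ∈ S l
  simpa [Finset.bipartiteAbove, Finset.bipartiteBelow] using h

lemma dimH_range_commonRootsMap_le (b : J → ℝ) {h : E → ∀ j, Fin (d j) → ℝ}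
    (hh : ContDiff ℝ 1 h) (hm : ∀ j, m ≤ d j) (hdim : Module.finrank ℝ E + m < m * s)
    {S : Fin m → Finset J} (hS : ∀ l, s ≤ (S l).card) :
    dimH (Set.range (commonRootsMap b h S)) ≤ (∑ j, d j - 1 : ℕ) := by
  refine (contDiff_commonRootsMap b hh S).dimH_range_le.trans (Nat.cast_le.2 ?_)
  have hfin : ∑ j, (d j - Finset.card {l | j ∈ S l}) + ∑ j, Finset.card {l | j ∈ S l}
      = ∑ j, d j := by
    rw [← Finset.sum_add_distrib]
    exact Finset.sum_congr rfl fun j _ => Nat.sub_add_cancel ((card_filter_le S j).trans (hm j))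
  have hms : m * s ≤ ∑ j, Finset.card {l | j ∈ S l} := by
    rw [sum_card_filter_mem]
    simpa using Finset.card_nsmul_le_sum Finset.univ (fun l => (S l).card) s fun l _ => hS l
  simp only [Module.finrank_prod, Module.finrank_pi_fintype,
    Fintype.card_fin, Module.finrank_self, Finset.sum_const, Finset.card_univ, smul_eq_mul, mul_one]
  lia

/-- Sard's lemma in its easy range: `m` points at which `s` of the polynomials vanish impose `m * s`
conditions on `finrank ℝ E + m` parameters. -/
lemma dense_forall_encard_lt [Nonempty J] (b : J → ℝ) {h : E → ∀ j, Fin (d j) → ℝ}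
    (hh : ContDiff ℝ 1 h) (hm : ∀ j, m ≤ d j) (hdim : Module.finrank ℝ E + m < m * s) :
    Dense {ω : ∀ j, Fin (d j) → ℝ | ∀ p, {t : ℝ |
      s ≤ Finset.card {j | (leadPoly (b j) (h p j + ω j)).IsRoot t}}.encard < m} := by
  have hsum : 0 < ∑ j, d j := by
    have hm0 : 0 < m := Nat.pos_of_ne_zero fun h0 => by simp [h0] at hdim
    exact Finset.sum_pos (fun j _ => hm0.trans_le (hm j)) Finset.univ_nonempty
  have hlt : dimH (⋃ S : {S : Fin m → Finset J // ∀ l, s ≤ (S l).card},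
      Set.range (commonRootsMap b h S.1)) < Module.finrank ℝ (∀ j, Fin (d j) → ℝ) := by
    rw [dimH_iUnion]
    refine (iSup_le fun S => dimH_range_commonRootsMap_le b hh hm hdim S.2).trans_lt ?_
    have hfinrank : Module.finrank ℝ (∀ j, Fin (d j) → ℝ) = ∑ j, d j := by
      simp [Module.finrank_pi_fintype]
    rw [hfinrank]
    exact_mod_cast Nat.sub_lt hsum one_pos
  refine (dense_compl_of_dimH_lt_finrank hlt).mono fun ω hω p => ?_
  by_contra! hcard
  obtain ⟨t, ht, hmem⟩ := exists_injective_of_le_encard hcard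
  exact hω (Set.mem_iUnion.2 ⟨⟨_, hmem⟩, mem_range_commonRootsMap hm ht fun l j hj => by
    simpa using hj⟩)

end Genericity

section Generic

variable {r : ℕ} {D : Fin r → ℕ}

/-- The real coordinates of a tuple of polynomials: real parts of the coefficients are indexed by
`(k, true)`, imaginary parts by `(k, false)`. -/
def realCoords : Coeffs D →L[ℝ] ∀ j : Fin r × Bool, Fin (D j.1) → ℝ :=
  LinearMap.toContinuousLinearMap <| LinearMap.pi fun j => LinearMap.pi fun n =>
    bif j.2 then Complex.reLm ∘ₗ LinearMap.proj n ∘ₗ LinearMap.proj j.1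
    else Complex.imLm ∘ₗ LinearMap.proj n ∘ₗ LinearMap.proj j.1

lemma isOpenMap_realCoords : IsOpenMap (realCoords (D := D)) := by
  refine ContinuousLinearMap.isOpenMap _ fun ω => ⟨fun k n => ⟨ω (k, true) n, ω (k, false) n⟩, ?_⟩
  ext ⟨k, b⟩ n
  cases b <;> rfl

lemma eval_toPoly_eq (a : Coeffs D) (k : Fin r) (t : ℝ) : (toPoly (a k)).eval (t : ℂ) =
    ⟨(leadPoly 1 (realCoords a (k, true))).eval t,
      (leadPoly 0 (realCoords a (k, false))).eval t⟩ :=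
  toPoly_eval_ofReal (a k) t

/-- A tuple is generic relative to the index `i` if there are fewer than `m` real points at which at
least `ρ` of the other polynomials and the real part of the `i`-th one vanish. -/
def IsGeneric (i : Fin r) (m ρ : ℕ) (a : Coeffs D) : Prop :=
  {t : ℝ | ρ ≤ Finset.card {k | k ≠ i ∧ (toPoly (a k)).IsRoot (t : ℂ)} ∧
    ((toPoly (a i)).eval (t : ℂ)).re = 0}.encard < m

variable {i : Fin r} {m ρ : ℕ}

lemma two_mul_add_one_le_card_isRoot {a : Coeffs D} {t : ℝ}
    (hcard : ρ ≤ Finset.card {k | k ≠ i ∧ (toPoly (a k)).IsRoot (t : ℂ)})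
    (hre : ((toPoly (a i)).eval (t : ℂ)).re = 0) :
    2 * ρ + 1 ≤ Finset.card {j : Fin r × Bool |
      (leadPoly (if j.2 then 1 else 0) (realCoords a j)).IsRoot t} := by
  set S : Finset (Fin r) := {k | k ≠ i ∧ (toPoly (a k)).IsRoot (t : ℂ)} with hS
  have hsub : insert (i, true) (S ×ˢ Finset.univ) ⊆ Finset.univ.filter fun j : Fin r × Bool =>
      (leadPoly (if j.2 then 1 else 0) (realCoords a j)).IsRoot t := by
    refine Finset.insert_subset ?_ fun ⟨k, b⟩ hk => ?_
    · rw [eval_toPoly_eq] at hre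
      simpa using hre
    · have hroot : (toPoly (a k)).eval (t : ℂ) = 0 := by simp_all
      rw [eval_toPoly_eq, Complex.ext_iff] at hroot
      cases b
      · simpa using hroot.2
      · simpa using hroot.1
  refine le_trans ?_ (Finset.card_le_card hsub)
  rw [Finset.card_insert_of_notMem (by simp [hS]), Finset.card_product, Finset.card_univ,
    Fintype.card_bool]
  lia

lemma dense_isGeneric {E : Type*} [NormedAddCommGroup E] [NormedSpace ℝ E] [FiniteDimensional ℝ E]
    {G : E → Coeffs D} (hG : ContDiff ℝ 1 G) (hm : ∀ k, m ≤ D k)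
    (hdim : Module.finrank ℝ E < 2 * m * ρ) :
    Dense {w : Coeffs D | ∀ p, IsGeneric i m ρ (G p + w)} := by
  have : Nonempty (Fin r × Bool) := ⟨(i, true)⟩
  have hdense := dense_forall_encard_lt (s := 2 * ρ + 1)
    (fun j : Fin r × Bool => if j.2 then 1 else 0) ((realCoords (D := D)).contDiff.comp hG)
    (fun j => hm j.1) (by linarith)
  refine (hdense.preimage isOpenMap_realCoords).mono fun w hw p => ?_
  refine (Set.encard_le_encard fun t ht => ?_).trans_lt (hw p)
  have hle := two_mul_add_one_le_card_isRoot ht.1 ht.2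
  rwa [map_add] at hle

/-- The coordinatewise projection of Euclidean space onto the cube. -/
def projCube {ι : Type*} (x : ι → ℝ) : ι → unitInterval :=
  fun j => Set.projIcc 0 1 zero_le_one (x j)

lemma exists_isGeneric_dist_lt {ι : Type*} [Fintype ι] (hm : ∀ k, m ≤ D k)
    (hdim : Fintype.card ι < 2 * m * ρ) (f : C(ι → unitInterval, Coeffs D)) {ε : ℝ} (hε : 0 < ε) :
    ∃ g : C(ι → unitInterval, Coeffs D), ∀ p, dist (g p) (f p) < ε ∧ IsGeneric i m ρ (g p) := by
  have hproj : UniformContinuous (projCube (ι := ι)) := uniformContinuous_pi.2 fun j =>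
    (LipschitzWith.projIcc zero_le_one).uniformContinuous.comp (Pi.uniformContinuous_proj _ j)
  obtain ⟨G, hG, hdist⟩ := ((CompactSpace.uniformContinuous_of_continuous
    f.continuous).comp hproj).exists_contDiff_dist_le (half_pos hε)
  have hG₁ : ContDiff ℝ 1 G := hG.of_le (by exact_mod_cast le_top)
  obtain ⟨w, hw, hwε⟩ := (dense_isGeneric hG₁ hm
    (by rwa [Module.finrank_fintype_fun_eq_card])).exists_dist_lt 0 (half_pos hε)
  rw [dist_zero_left] at hwε
  refine ⟨⟨fun p => G (fun j => p j) + w, by fun_prop⟩, fun p => ⟨?_, hw _⟩⟩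
  have hp : dist (G fun j => p j) (f p) < ε / 2 := by
    have hproj_p : projCube (fun j => (p j : ℝ)) = p := funext fun j => Set.projIcc_val _ _
    simpa only [Function.comp_apply, hproj_p] using hdist fun j => p j
  calc dist (G (fun j => p j) + w) (f p) = ‖(G (fun j => p j) - f p) + w‖ := by
        rw [dist_eq_norm, add_sub_right_comm]
    _ ≤ dist (G fun j => p j) (f p) + ‖w‖ := by rw [dist_eq_norm]; exact norm_add_le _ _
    _ < ε := by linarith

end Generic

section ImagShift

variable {r : ℕ} {D : Fin r → ℕ}

/-- The perturbation adding `I` times a real polynomial to the `i`-th polynomial of a tuple. -/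
def imagShift (i : Fin r) : (Fin (D i) → ℝ) →L[ℝ] Coeffs D :=
  LinearMap.toContinuousLinearMap <| LinearMap.single ℝ (fun k => Fin (D k) → ℂ) i ∘ₗ
    LinearMap.pi fun n => LinearMap.toSpanSingleton ℝ ℂ Complex.I ∘ₗ LinearMap.proj n

variable {i : Fin r}

lemma imagShift_of_ne (v : Fin (D i) → ℝ) {k : Fin r} (hk : k ≠ i) : imagShift i v k = 0 :=
  Pi.single_eq_of_ne hk _

lemma eval_toPoly_add_imagShift (a : Coeffs D) (v : Fin (D i) → ℝ) (z : ℂ) :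
    (toPoly ((a + imagShift i v) i)).eval z =
      (toPoly (a i)).eval z + Complex.I * aeval z (lowPoly v) := by
  have hi : imagShift i v i = fun n => v n • Complex.I := Pi.single_eq_same _ _
  rw [Pi.add_apply, hi, toPoly_add, eval_add]
  simp [lowPoly_apply, eval_finsetSum, Finset.mul_sum, mul_left_comm, mul_assoc]

variable {K : Set (Finset (Fin r))}

/-- The shifts `v` such that `a + τ • imagShift i v` stays in `PolSp K D` for `|τ| ≤ 1`. Symmetric
intervals make this a convex condition on `v`. -/
def admissibleShifts (K : Set (Finset (Fin r))) (i : Fin r) (a : Coeffs D) :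
    Set (Fin (D i) → ℝ) :=
  {v | ∀ τ ∈ Set.Icc (-1 : ℝ) 1, a + τ • imagShift i v ∈ PolSp K D}

/-- The real points at which imaginary perturbations of the `i`-th polynomial could create a
forbidden common root. -/
def criticalPoints (K : Set (Finset (Fin r))) (i : Fin r) (a : Coeffs D) : Set ℝ :=
  {t | ∃ σ ∉ K, i ∈ σ ∧ (∀ k ∈ σ, k ≠ i → (toPoly (a k)).IsRoot (t : ℂ)) ∧
    ((toPoly (a i)).eval (t : ℂ)).re = 0}

lemma isRoot_toPoly_add_smul_imagShift (a : Coeffs D) (v : Fin (D i) → ℝ) (τ t : ℝ) :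
    (toPoly ((a + τ • imagShift i v) i)).IsRoot (t : ℂ) ↔
      ((toPoly (a i)).eval (t : ℂ)).re = 0 ∧
      ((toPoly (a i)).eval (t : ℂ)).im + τ * (lowPoly v).eval t = 0 := by
  have hreal (q : ℝ[X]) : aeval (t : ℂ) q = ((q.eval t : ℝ) : ℂ) :=
    aeval_algebraMap_apply_eq_algebraMap_eval t q
  rw [← map_smul, IsRoot, eval_toPoly_add_imagShift, hreal, map_smul, eval_smul, Complex.ext_iff]
  simp

lemma mem_admissibleShifts_iff {a : Coeffs D} {v : Fin (D i) → ℝ} :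
    v ∈ admissibleShifts K i a ↔ a ∈ PolSp K D ∧ ∀ t ∈ criticalPoints K i a,
      |(lowPoly v).eval t| < |((toPoly (a i)).eval (t : ℂ)).im| := by
  constructor
  · refine fun h => ⟨by simpa using h 0 (by simp), fun t ⟨σ, hσ, _, hroot, hre⟩ => ?_⟩
    by_contra! hle
    obtain ⟨τ, hτ, h0⟩ : ∃ τ ∈ Set.Icc (-1 : ℝ) 1,
        ((toPoly (a i)).eval (t : ℂ)).im + τ * (lowPoly v).eval t = 0 := by
      rcases eq_or_ne ((lowPoly v).eval t) 0 with hv | hv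
      · exact ⟨0, by simp, by simpa [hv] using hle⟩
      · refine ⟨-((toPoly (a i)).eval (t : ℂ)).im / (lowPoly v).eval t, ?_, by field_simp; ring⟩
        rw [Set.mem_Icc, ← abs_le, abs_div, abs_neg]
        exact (div_le_one (abs_pos.2 hv)).2 hle
    obtain ⟨k, hk, hne⟩ := h τ hτ σ hσ t
    rcases eq_or_ne k i with rfl | hki
    · exact hne ((isRoot_toPoly_add_smul_imagShift a v τ t).2 ⟨hre, h0⟩)
    · exact hne (by simpa [imagShift_of_ne v hki] using hroot k hk hki)
  · rintro ⟨ha, h⟩ τ hτ σ hσ t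
    by_contra! hroot
    have hne {k : Fin r} (hk : k ∈ σ) (hki : k ≠ i) : (toPoly (a k)).IsRoot (t : ℂ) := by
      simpa [imagShift_of_ne v hki] using hroot k hk
    by_cases hi : i ∈ σ
    · obtain ⟨hre, him⟩ := (isRoot_toPoly_add_smul_imagShift a v τ t).1 (hroot i hi)
      refine (h t ⟨σ, hσ, hi, fun k => hne, hre⟩).not_ge ?_
      rw [eq_neg_of_add_eq_zero_left him, abs_neg, abs_mul]
      exact mul_le_of_le_one_left (abs_nonneg _) (abs_le.2 hτ)
    · obtain ⟨k, hk, hk₀⟩ := ha σ hσ t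
      exact hk₀ (hne hk fun h => hi (h ▸ hk))

lemma zero_mem_admissibleShifts {a : Coeffs D} (ha : a ∈ PolSp K D) :
    0 ∈ admissibleShifts K i a := fun τ _ => by
  rwa [map_zero, smul_zero, add_zero]

lemma convex_admissibleShifts (a : Coeffs D) : Convex ℝ (admissibleShifts K i a) := by
  by_cases ha : a ∈ PolSp K D
  · have hInter : admissibleShifts K i a = ⋂ t ∈ criticalPoints K i a,
        ((leval t).comp lowPoly) ⁻¹' Metric.ball 0 |((toPoly (a i)).eval (t : ℂ)).im| := by
      ext v
      simp [mem_admissibleShifts_iff, ha]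
    rw [hInter]
    exact convex_iInter₂ fun t _ => (convex_ball _ _).linear_preimage _
  · have hempty : admissibleShifts K i a = ∅ :=
      Set.eq_empty_of_forall_notMem fun v hv => ha (mem_admissibleShifts_iff.1 hv).1
    rw [hempty]
    exact convex_empty

lemma isOpen_setOf_mem_admissibleShifts :
    IsOpen {y : Coeffs D × (Fin (D i) → ℝ) | y.2 ∈ admissibleShifts K i y.1} := by
  refine isOpen_iff_eventually.2 fun y hy =>
    isCompact_Icc.eventually_forall_of_forall_eventually fun τ hτ => ?_
  have hcont : Continuous fun y : (Coeffs D × (Fin (D i) → ℝ)) × ℝ =>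
      y.1.1 + y.2 • imagShift i y.1.2 := by fun_prop
  exact hcont.continuousAt.eventually (isOpen_PolSp.mem_nhds (hy τ hτ))

lemma exists_aeval_eq {z : ℂ} (hz : z.im ≠ 0) (w : ℂ) :
    ∃ q : ℝ[X], q.natDegree ≤ 1 ∧ aeval z q = w := by
  refine ⟨C (w.im / z.im) * X + C (w.re - w.im / z.im * z.re), natDegree_linear_le, ?_⟩
  apply Complex.ext <;> simp [hz]

lemma exists_mem_admissibleShifts {a : Coeffs D} (ha : a ∈ PolSp K D) {m ρ : ℕ}
    (hm : m + 1 ≤ D i) (hK : ∀ σ ∉ K, ρ + 1 ≤ σ.card) (hg : IsGeneric i m ρ a) {z : ℂ}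
    (hz : z.im ≠ 0) (w : ℂ) : ∃ v ∈ admissibleShifts K i a, aeval z (lowPoly v) = w := by
  have hcrit : (criticalPoints K i a).encard < m := by
    refine (Set.encard_le_encard ?_).trans_lt hg
    rintro t ⟨σ, hσ, hi, hroot, hre⟩
    refine ⟨?_, hre⟩
    have hcard := hK σ hσ
    rw [← Finset.card_erase_add_one hi] at hcard
    refine (Nat.le_of_succ_le_succ hcard).trans (Finset.card_le_card fun k hk => ?_)
    obtain ⟨hki, hk⟩ := Finset.mem_erase.1 hk
    exact Finset.mem_filter.2 ⟨Finset.mem_univ k, hki, hroot k hk hki⟩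
  obtain ⟨A, hA⟩ := (Set.encard_lt_top_iff.1 (hcrit.trans_le le_top)).exists_finset_coe
  set Q : ℝ[X] := ∏ t ∈ A, (X - C t)
  have hQz : aeval z Q ≠ 0 := by
    simp only [Q, map_prod, map_sub, aeval_X, aeval_C]
    refine Finset.prod_ne_zero_iff.2 fun t _ h => hz ?_
    simpa using congrArg Complex.im h
  obtain ⟨q, hq, hqz⟩ := exists_aeval_eq hz (w / aeval z Q)
  have hdeg : (Q * q).degree < D i := by
    have hAm : A.card < m := by rwa [← hA, Set.encard_coe_eq_coe_finsetCard, Nat.cast_lt] at hcrit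
    have hQ : Q.natDegree = A.card := natDegree_finsetProd_X_sub_C_eq_card A id
    refine degree_le_natDegree.trans_lt (Nat.cast_lt.2 (natDegree_mul_le.trans_lt ?_))
    lia
  refine ⟨coeffVec (D i) (Q * q), mem_admissibleShifts_iff.2 ⟨ha, fun t ht => ?_⟩, ?_⟩
  · have h0 : (Q * q).eval t = 0 := by
      rw [← hA, Finset.mem_coe] at ht
      rw [eval_mul, eval_prod, Finset.prod_eq_zero ht (by simp), zero_mul]
    rw [lowPoly_coeffVec hdeg, h0]
    simpa using (mem_admissibleShifts_iff.1 (zero_mem_admissibleShifts (i := i) ha)).2 t ht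
  · rw [lowPoly_coeffVec hdeg, map_mul, hqz, mul_div_cancel₀ _ hQz]

lemma exists_rightInverse_aeval_lowPoly {d : ℕ} (hd : 2 ≤ d) {z : ℂ} (hz : z.im ≠ 0) :
    ∃ L : ℂ →L[ℝ] (Fin d → ℝ), ∀ w, aeval z (lowPoly (L w)) = w := by
  obtain ⟨L, hL⟩ := ((aeval (R := ℝ) z).toLinearMap ∘ₗ
    (lowPoly (d := d))).exists_rightInverse_of_surjective <| LinearMap.range_eq_top.2 fun w => by
      obtain ⟨q, hq, hqz⟩ := exists_aeval_eq hz w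
      have hdeg : q.degree < d := degree_le_natDegree.trans_lt (Nat.cast_lt.2 (by lia))
      exact ⟨coeffVec d q, by simp [lowPoly_coeffVec hdeg, hqz]⟩
  exact ⟨LinearMap.toContinuousLinearMap L, fun w => LinearMap.congr_fun hL w⟩

end ImagShift

section Homotopies

/-- The retraction of the real line onto the unit interval, used as a cutoff function. -/
def clamp : C(ℝ, unitInterval) := ⟨Set.projIcc 0 1 zero_le_one, continuous_projIcc⟩

lemma clamp_of_nonpos {t : ℝ} (ht : t ≤ 0) : clamp t = 0 :=
  Set.projIcc_of_le_left zero_le_one ht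

lemma clamp_of_one_le {t : ℝ} (ht : 1 ≤ t) : clamp t = 1 :=
  Set.projIcc_of_right_le zero_le_one ht

variable {P Z : Type*} [TopologicalSpace P] [TopologicalSpace Z] {A : Set Z}

lemma homotopicRel_of_forall_mem {F G : C(P, A)} {S : Set P} (H : unitInterval → P → Z)
    (hH : Continuous fun y : unitInterval × P => H y.1 y.2) (hA : ∀ s p, H s p ∈ A)
    (h₀ : ∀ p, H 0 p = F p) (h₁ : ∀ p, H 1 p = G p) (hS : ∀ s, ∀ p ∈ S, H s p = F p) :
    F.HomotopicRel G S :=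
  ⟨⟨⟨⟨fun y => ⟨H y.1 y.2, hA _ _⟩, hH.subtype_mk _⟩, fun p => Subtype.ext (h₀ p),
      fun p => Subtype.ext (h₁ p)⟩, fun s p hp => Subtype.ext (hS s p hp)⟩⟩

lemma homotopicRel_mono {F G : C(P, Z)} {S T : Set P} (h : F.HomotopicRel G T) (hST : S ⊆ T) :
    F.HomotopicRel G S :=
  h.map fun H => ⟨H.toHomotopy, fun t p hp => H.prop' t p (hST hp)⟩

lemma exists_homotopicRel_add [AddCommGroup Z] [Module ℝ Z] [ContinuousAdd Z] [ContinuousSMul ℝ Z]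
    (F : C(P, A)) {b : P → Z} (hb : Continuous b) {S : Set P} (hS : ∀ p ∈ S, b p = 0)
    (hA : ∀ p, ∀ s ∈ Set.Icc (0 : ℝ) 1, F p + s • b p ∈ A) :
    ∃ G : C(P, A), (∀ p, (G p : Z) = F p + b p) ∧ F.HomotopicRel G S := by
  refine ⟨⟨fun p => ⟨F p + b p, by simpa using hA p 1 (by simp)⟩, by fun_prop⟩, fun p => rfl,
    homotopicRel_of_forall_mem (fun s p => F p + (s : ℝ) • b p) (by fun_prop)
      (fun s p => hA p s s.2) ?_ ?_ ?_⟩ <;> simp +contextual [hS]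

end Homotopies

section RootCreation

variable {r : ℕ} {K : Set (Finset (Fin r))} {D : Fin r → ℕ} {i : Fin r} {m ρ : ℕ} {z : ℂ}

/-- The conditions on `v` are convex in `v`, so local solutions are glued by a partition of
unity. -/
lemma exists_continuous_mem_admissibleShifts {P : Type*} [TopologicalSpace P] [NormalSpace P]
    [ParacompactSpace P] (hi : m + 1 ≤ D i) (hi₂ : 2 ≤ D i) (hK : ∀ σ ∉ K, ρ + 1 ≤ σ.card)
    (hz : z.im ≠ 0) {g : P → Coeffs D} (hg : Continuous g) {c : P → ℝ} (hc : Continuous c)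
    {v₀ : P → Fin (D i) → ℝ} (hv₀ : Continuous v₀)
    (h₀ : ∀ p, c p < 1 → v₀ p ∈ admissibleShifts K i (g p) ∧
      (0 ≤ c p → aeval z (lowPoly (v₀ p)) = Complex.I * (toPoly (g p i)).eval z))
    (h₁ : ∀ p, 1 ≤ c p → g p ∈ PolSp K D ∧ IsGeneric i m ρ (g p)) :
    ∃ v : P → Fin (D i) → ℝ, Continuous v ∧ ∀ p, v p ∈ admissibleShifts K i (g p) ∧
      (0 ≤ c p → aeval z (lowPoly (v p)) = Complex.I * (toPoly (g p i)).eval z) ∧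
      (c p ≤ 0 → v p = v₀ p) := by
  set W : P → ℂ := fun p => Complex.I * (toPoly (g p i)).eval z
  have hW : Continuous W :=
    continuous_const.mul (continuous_eval_toPoly (by fun_prop) (by fun_prop))
  let T (p : P) : Set (Fin (D i) → ℝ) := admissibleShifts K i (g p) ∩
    ({v | 0 ≤ c p → aeval z (lowPoly v) = W p} ∩ {v | c p ≤ 0 → v = v₀ p})
  have hT (p : P) : Convex ℝ (T p) := by
    refine (convex_admissibleShifts _).inter (Convex.inter ?_ ?_)
    · intro v hv w hw α β _ _ hαβ hcp
      rw [map_add, map_smul, map_smul, map_add, map_smul, map_smul, hv hcp, hw hcp, ← add_smul,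
        hαβ, one_smul]
    · intro v hv w hw α β _ _ hαβ hcp
      rw [hv hcp, hw hcp, ← add_smul, hαβ, one_smul]
  obtain ⟨v, hv⟩ := exists_continuous_forall_mem_convex_of_local hT fun p => by
    rcases lt_or_ge (c p) 1 with hp | hp
    · exact ⟨{q | c q < 1}, (isOpen_lt hc continuous_const).mem_nhds hp, v₀, hv₀.continuousOn,
        fun q hq => ⟨(h₀ q hq).1, (h₀ q hq).2, fun _ => rfl⟩⟩
    obtain ⟨w, hw, hwz⟩ := exists_mem_admissibleShifts (h₁ p hp).1 hi hK (h₁ p hp).2 hz (W p)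
    obtain ⟨L, hL⟩ := exists_rightInverse_aeval_lowPoly hi₂ hz
    have hcont : Continuous fun q => (g q, w + L (W q - W p)) := by fun_prop
    have hadm : ∀ᶠ q in 𝓝 p, w + L (W q - W p) ∈ admissibleShifts K i (g q) :=
      hcont.continuousAt.eventually
        (isOpen_setOf_mem_admissibleShifts.mem_nhds (by simpa using hw))
    have hpos : ∀ᶠ q in 𝓝 p, 0 < c q := hc.continuousAt.eventually_const_lt (by linarith)
    refine ⟨_, hadm.and hpos, fun q => w + L (W q - W p), by fun_prop, fun q hq =>
      ⟨hq.1, fun _ => ?_, fun hcq => absurd hq.2 hcq.not_gt⟩⟩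
    rw [map_add, map_add, hwz, hL, add_sub_cancel]
  exact ⟨v, v.continuous, hv⟩

lemma continuous_eval_lowPoly {d : ℕ} (z : ℂ) :
    Continuous fun b : Fin d → ℂ => (lowPoly b).eval z := by
  simp only [lowPoly_apply, eval_finsetSum, eval_mul, eval_C, eval_pow, eval_X]
  fun_prop

lemma exists_forall_mem_admissibleShifts {P : Type*} [TopologicalSpace P] [CompactSpace P]
    (F : C(P, PolSp K D)) (L : ℂ →L[ℝ] (Fin (D i) → ℝ)) (z : ℂ) :
    ∃ η > 0, ∀ b : Coeffs D, ‖b‖ < η → ∀ p,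
      L (Complex.I * (lowPoly (b i)).eval z) ∈ admissibleShifts K i ((F p).1 + b) := by
  have heval : Continuous fun y : Coeffs D × P => (lowPoly (y.1 i)).eval z :=
    (continuous_eval_lowPoly z).comp (by fun_prop)
  have hcont : Continuous fun y : Coeffs D × P =>
      ((F y.2).1 + y.1, L (Complex.I * (lowPoly (y.1 i)).eval z)) := by
    fun_prop
  have hev : ∀ᶠ b in 𝓝 (0 : Coeffs D), ∀ p ∈ Set.univ,
      L (Complex.I * (lowPoly (b i)).eval z) ∈ admissibleShifts K i ((F p).1 + b) := by
    refine isCompact_univ.eventually_forall_of_forall_eventually fun p _ =>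
      hcont.continuousAt.eventually (isOpen_setOf_mem_admissibleShifts.mem_nhds ?_)
    simpa using zero_mem_admissibleShifts (F p).2
  obtain ⟨η, hη, h⟩ := Metric.eventually_nhds_iff.1 hev
  exact ⟨η, hη, fun b hb p => h (by simpa using hb) p trivial⟩

variable {ι : Type*} [Fintype ι]

lemma exists_homotopicRel_isGeneric (hm : ∀ k, m ≤ D k) (hdim : Fintype.card ι < 2 * m * ρ)
    (L : ℂ →L[ℝ] (Fin (D i) → ℝ)) (z : ℂ) (F : C(ι → unitInterval, PolSp K D))
    {c : (ι → unitInterval) → ℝ} (hc : Continuous c) :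
    ∃ (G : C(ι → unitInterval, PolSp K D)) (b : C(ι → unitInterval, Coeffs D)),
      F.HomotopicRel G {p | c p ≤ 0} ∧ (∀ p, (G p).1 = (F p).1 + b p) ∧ (∀ p, c p ≤ 0 → b p = 0) ∧
      (∀ p, L (Complex.I * (lowPoly (b p i)).eval z) ∈ admissibleShifts K i (G p).1) ∧
      ∀ p, 1 ≤ c p → IsGeneric i m ρ (G p).1 := by
  obtain ⟨η, hη, hadm⟩ := exists_forall_mem_admissibleShifts F L z
  obtain ⟨f, hf⟩ := exists_isGeneric_dist_lt (i := i) hm hdim ⟨fun p => (F p).1, by fun_prop⟩ hη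
  let b : C(ι → unitInterval, Coeffs D) :=
    ⟨fun p => (clamp (c p) : ℝ) • (f p - (F p).1), by fun_prop⟩
  have hb₀ (p) (hp : c p ≤ 0) : b p = 0 := by simp [b, clamp_of_nonpos hp]
  have hbη (p) {s : ℝ} (hs : s ∈ Set.Icc (0 : ℝ) 1) : ‖s • b p‖ < η := by
    have hle (s : unitInterval) (x : Coeffs D) : ‖(s : ℝ) • x‖ ≤ ‖x‖ := by
      rw [norm_smul, Real.norm_of_nonneg s.2.1]
      exact mul_le_of_le_one_left (norm_nonneg x) s.2.2
    exact ((hle ⟨s, hs⟩ _).trans (hle _ _)).trans_lt (by simpa [dist_eq_norm] using (hf p).1)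
  obtain ⟨G, hG, hFG⟩ := exists_homotopicRel_add F b.continuous (S := {p | c p ≤ 0}) hb₀
    fun p s hs => (mem_admissibleShifts_iff.1 (hadm _ (hbη p hs) p)).1
  refine ⟨G, b, hFG, hG, hb₀, fun p => ?_, fun p hp => ?_⟩
  · rw [hG]
    exact hadm _ (by simpa using hbη p (s := 1) (by simp)) p
  · have hGf : (G p).1 = f p := by simp [hG, b, clamp_of_one_le hp]
    exact hGf ▸ (hf p).2

lemma exists_homotopicRel_forall_isRoot (hm : ∀ k, m ≤ D k) (hi : m + 1 ≤ D i)
    (hdim : Fintype.card ι < 2 * m * ρ) (hK : ∀ σ ∉ K, ρ + 1 ≤ σ.card) (hz : z.im ≠ 0)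
    (F : C(ι → unitInterval, PolSp K D)) {c : (ι → unitInterval) → ℝ} (hc : Continuous c)
    (hF : ∀ p, 0 ≤ c p → c p ≤ 1 → (toPoly ((F p).1 i)).IsRoot z) :
    ∃ F' : C(ι → unitInterval, PolSp K D), F.HomotopicRel F' {p | c p ≤ 0} ∧
      ∀ p, 0 ≤ c p → (toPoly ((F' p).1 i)).IsRoot z := by
  have hi₂ : 2 ≤ D i := by
    have hm₀ : m ≠ 0 := fun h₀ => by simp [h₀] at hdim
    lia
  obtain ⟨L, hL⟩ := exists_rightInverse_aeval_lowPoly hi₂ hz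
  obtain ⟨G, b, hFG, hG, hb₀, hadm, hgen⟩ :=
    exists_homotopicRel_isGeneric hm hdim L z F hc
  have hv₀ : Continuous fun p => L (Complex.I * (lowPoly (b p i)).eval z) :=
    L.continuous.comp (continuous_const.mul ((continuous_eval_lowPoly z).comp (by fun_prop)))
  obtain ⟨v, hv, hvT⟩ := exists_continuous_mem_admissibleShifts hi hi₂ hK hz
    (g := fun p => (G p).1) (by fun_prop) hc hv₀
    (fun p hp => ⟨hadm p, fun hp₀ => by
      rw [hL, hG, Pi.add_apply, toPoly_add, eval_add, hF p hp₀ hp.le, zero_add]⟩)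
    (fun p hp => ⟨(G p).2, hgen p hp⟩)
  have hv_zero (p) (hp : c p ≤ 0) : imagShift i (v p) = 0 := by
    simp [(hvT p).2.2 hp, hb₀ p hp]
  obtain ⟨F', hF', hGF'⟩ := exists_homotopicRel_add G ((imagShift i).continuous.comp hv)
    (S := {p | c p ≤ 0}) hv_zero fun p s hs => (hvT p).1 s ⟨by linarith [hs.1], hs.2⟩
  refine ⟨F', hFG.trans hGF', fun p hp => ?_⟩
  rw [IsRoot, hF', Function.comp_apply, eval_toPoly_add_imagShift, (hvT p).2.1 hp, ← mul_assoc,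
    Complex.I_mul_I, neg_one_mul, add_neg_cancel]

end RootCreation

section AddingRoots

variable {r : ℕ} {K : Set (Finset (Fin r))} {D : Fin r → ℕ} {i : Fin r} {B : ℝ}

/-- The multidegree `D + e_i`. -/
abbrev raise (D : Fin r → ℕ) (i : Fin r) : Fin r → ℕ := fun k => if k = i then D k + 1 else D k

/-- The factor by which the `k`-th polynomial is multiplied when the `i`-th one acquires the
root `y`. -/
def linearFactor (i : Fin r) (y : ℂ) (k : Fin r) : ℂ[X] := if k = i then X - C y else 1

/-- Multiplication of the `i`-th polynomial by `X - y`. -/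
def addRoot (i : Fin r) (y : ℂ) (a : Coeffs D) : Coeffs (raise D i) :=
  fun k => coeffVec _ (toPoly (a k) * linearFactor i y k)

/-- Division of the `i`-th polynomial by `X - y`, discarding the remainder. -/
def removeRoot (i : Fin r) (y : ℂ) (b : Coeffs (raise D i)) : Coeffs D :=
  fun k => coeffVec _ (toPoly (b k) /ₘ linearFactor i y k)

lemma monic_linearFactor (i : Fin r) (y : ℂ) (k : Fin r) : (linearFactor i y k).Monic := by
  unfold linearFactor
  split_ifs
  exacts [monic_X_sub_C y, monic_one]

lemma add_natDegree_linearFactor (i : Fin r) (y : ℂ) (k : Fin r) :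
    D k + (linearFactor i y k).natDegree = raise D i k := by
  unfold linearFactor raise
  split_ifs <;> simp

lemma linearFactor_mem_coeffwise {P : Type*} [TopologicalSpace P] {y : P → ℂ} (hy : Continuous y)
    (k : Fin r) : (fun p => linearFactor i (y p) k) ∈ coeffwise (continuousSubring P ℂ) := by
  unfold linearFactor
  split_ifs
  exacts [X_sub_C_mem_coeffwise hy, Subring.one_mem _]

lemma toPoly_addRoot (y : ℂ) (a : Coeffs D) (k : Fin r) :
    toPoly (addRoot i y a k) = toPoly (a k) * linearFactor i y k :=
  toPoly_coeffVec ((monic_toPoly _).mul (monic_linearFactor i y k)) <| by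
    rw [(monic_toPoly _).natDegree_mul (monic_linearFactor i y k), natDegree_toPoly,
      add_natDegree_linearFactor]

lemma isRoot_toPoly_addRoot {y z : ℂ} {a : Coeffs D} {k : Fin r} :
    (toPoly (addRoot i y a k)).IsRoot z ↔ (toPoly (a k)).IsRoot z ∨ k = i ∧ z = y := by
  rw [toPoly_addRoot, root_mul, linearFactor]
  split_ifs with h <;> simp [h, sub_eq_zero]

lemma removeRoot_addRoot (y : ℂ) (a : Coeffs D) : removeRoot i y (addRoot i y a) = a := by
  ext1 k
  rw [removeRoot, toPoly_addRoot, mul_comm, mul_divByMonic_cancel_left _ (monic_linearFactor i y k),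
    coeffVec_toPoly]

lemma addRoot_removeRoot {y : ℂ} {b : Coeffs (raise D i)} (hy : (toPoly (b i)).IsRoot y) :
    addRoot i y (removeRoot i y b) = b := by
  ext1 k
  have hdvd : linearFactor i y k ∣ toPoly (b k) := by
    unfold linearFactor
    split_ifs with h
    · subst h
      exact dvd_iff_isRoot.2 hy
    · exact one_dvd _
  obtain ⟨q, hq⟩ := hdvd
  have hmonic : q.Monic := (monic_linearFactor i y k).of_mul_monic_left (hq ▸ monic_toPoly (b k))
  have hdeg : q.natDegree = D k := by
    have h := congrArg natDegree hq
    rw [natDegree_toPoly, (monic_linearFactor i y k).natDegree_mul hmonic,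
      ← add_natDegree_linearFactor (D := D) i y k] at h
    lia
  apply toPoly_injective
  rw [toPoly_addRoot, removeRoot, hq, mul_divByMonic_cancel_left _ (monic_linearFactor i y k),
    toPoly_coeffVec hmonic hdeg, mul_comm]

lemma addRoot_add_smul (y δ τ : ℂ) (a : Coeffs D) :
    addRoot i y a + τ • (addRoot i (y + δ) a - addRoot i y a) = addRoot i (y + τ * δ) a := by
  ext k n
  simp only [Pi.add_apply, Pi.smul_apply, Pi.sub_apply, smul_eq_mul, addRoot, coeffVec]
  rw [← coeff_sub, ← coeff_C_mul, ← coeff_add]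
  congr 1
  unfold linearFactor
  split_ifs
  · simp only [C_add, C_mul]
    ring
  · ring

section Continuity

variable {P : Type*} [TopologicalSpace P] {y : P → ℂ}

@[fun_prop]
lemma continuous_addRoot {a : P → Coeffs D} (hy : Continuous y) (ha : Continuous a) :
    Continuous fun p => addRoot i (y p) (a p) :=
  continuous_pi fun k => continuous_coeffVec <| Subring.mul_mem _
    (toPoly_mem_coeffwise (by fun_prop)) (linearFactor_mem_coeffwise hy k)

lemma continuous_removeRoot {b : P → Coeffs (raise D i)} (hy : Continuous y) (hb : Continuous b) :
    Continuous fun p => (removeRoot i (y p) (b p) : Coeffs D) := by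
  refine continuous_pi fun k => continuous_coeffVec ?_
  have hmem : (fun p => toPoly (b p k)) ∈ coeffwise (continuousSubring P ℂ) :=
    toPoly_mem_coeffwise (by fun_prop)
  unfold linearFactor
  split_ifs
  · exact divByMonic_mem_coeffwise hmem (fun p => natDegree_toPoly _) hy
  · simpa only [divByMonic_one] using hmem

end Continuity

lemma mem_PolSp_of_addRoot_mem {y : ℂ} {a : Coeffs D} (h : addRoot i y a ∈ PolSp K (raise D i)) :
    a ∈ PolSp K D := fun σ hσ t => by
  obtain ⟨k, hk, hne⟩ := h σ hσ t
  exact ⟨k, hk, fun hroot => hne (isRoot_toPoly_addRoot.2 (.inl hroot))⟩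

lemma addRoot_mem_PolSp (hK : ∀ σ ∉ K, 2 ≤ σ.card) {y : ℂ} {a : Coeffs D} (ha : a ∈ PolSp K D)
    (hy : y.im = 0 → ∀ k, ¬ (toPoly (a k)).IsRoot y) : addRoot i y a ∈ PolSp K (raise D i) := by
  intro σ hσ t
  obtain rfl | hty := eq_or_ne (t : ℂ) y
  · obtain ⟨k, hk, hki⟩ := Finset.exists_mem_ne (hK σ hσ) i
    exact ⟨k, hk, fun hroot => hy (Complex.ofReal_im t) k
      ((isRoot_toPoly_addRoot.1 hroot).resolve_right fun h => hki h.1)⟩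
  · obtain ⟨k, hk, hne⟩ := ha σ hσ t
    exact ⟨k, hk, fun hroot => hne
      ((isRoot_toPoly_addRoot.1 hroot).resolve_right fun h => hty h.2)⟩

/-- The part of `PolSp K D` where all roots have real part less than `B`. For `B < x.re`,
multiplying the `i`-th polynomial by `X - x` is defined on it. -/
def HalfPolSp (K : Set (Finset (Fin r))) (D : Fin r → ℕ) (B : ℝ) : Set (Coeffs D) :=
  PolSp K D ∩ {a | ∀ k z, (toPoly (a k)).IsRoot z → z.re < B}

lemma addRoot_mem_of_mem_HalfPolSp (hK : ∀ σ ∉ K, 2 ≤ σ.card) {y : ℂ} (hy : B < y.re)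
    {a : Coeffs D} (ha : a ∈ HalfPolSp K D B) : addRoot i y a ∈ PolSp K (raise D i) :=
  addRoot_mem_PolSp hK ha.1 fun _ k hroot => (ha.2 k y hroot).not_gt hy

/-- Adding the root `x` to the `i`-th polynomial, on tuples with roots to the left of `x`. -/
def addRootMap (i : Fin r) (hK : ∀ σ ∉ K, 2 ≤ σ.card) {x : ℂ} (hx : B < x.re) :
    C(HalfPolSp K D B, PolSp K (raise D i)) where
  toFun a := ⟨addRoot i x a.1, addRoot_mem_of_mem_HalfPolSp hK hx a.2⟩
  continuous_toFun := by fun_prop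

/-- Translation of all roots by `-s`. -/
def translate (s : ℝ) (a : Coeffs D) : Coeffs D :=
  fun k => coeffVec _ (taylor (s : ℂ) (toPoly (a k)))

lemma toPoly_translate (s : ℝ) (a : Coeffs D) (k : Fin r) :
    toPoly (translate s a k) = taylor (s : ℂ) (toPoly (a k)) :=
  toPoly_coeffVec ((leadingCoeff_taylor _ _).trans (monic_toPoly _))
    (by rw [natDegree_taylor, natDegree_toPoly])

lemma translate_zero (a : Coeffs D) : translate 0 a = a := by
  ext1 k
  simp [translate, coeffVec_toPoly]

lemma isRoot_toPoly_translate {s : ℝ} {a : Coeffs D} {k : Fin r} {z : ℂ} :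
    (toPoly (translate s a k)).IsRoot z ↔ (toPoly (a k)).IsRoot (z + s) := by
  rw [toPoly_translate, IsRoot, taylor_eval, add_comm, IsRoot]

@[fun_prop]
lemma continuous_translate {P : Type*} [TopologicalSpace P] {s : P → ℝ} {a : P → Coeffs D}
    (hs : Continuous s) (ha : Continuous a) : Continuous fun p => translate (s p) (a p) :=
  continuous_pi fun k => continuous_coeffVec <|
    taylor_mem_coeffwise (toPoly_mem_coeffwise (by fun_prop)) (fun p => (natDegree_toPoly _).le)
      (Complex.continuous_ofReal.comp hs)

lemma translate_mem_PolSp (s : ℝ) {a : Coeffs D} (ha : a ∈ PolSp K D) :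
    translate s a ∈ PolSp K D := fun σ hσ t => by
  obtain ⟨k, hk, hne⟩ := ha σ hσ (t + s)
  exact ⟨k, hk, fun hroot => hne (by exact_mod_cast isRoot_toPoly_translate.1 hroot)⟩

lemma translate_mem_HalfPolSp {s : ℝ} {a : Coeffs D} (ha : a ∈ HalfPolSp K D (B + s)) :
    translate s a ∈ HalfPolSp K D B := by
  refine ⟨translate_mem_PolSp s ha.1, fun k z hz => ?_⟩
  have h := ha.2 k _ (isRoot_toPoly_translate.1 hz)
  rw [Complex.add_re, Complex.ofReal_re] at h
  linarith

lemma HalfPolSp_mono {B' : ℝ} (h : B ≤ B') : HalfPolSp K D B ⊆ HalfPolSp K D B' :=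
  fun _ ha => ⟨ha.1, fun k z hz => (ha.2 k z hz).trans_le h⟩

end AddingRoots

section MovingTheNewRoot

variable {r : ℕ} {K : Set (Finset (Fin r))} {D : Fin r → ℕ} {i : Fin r} {B : ℝ} {x δ : ℂ}
  {P : Type*} [TopologicalSpace P]

lemma exists_re_eq_zero_forall_add_mul_im_ne_zero (x : ℂ) :
    ∃ δ : ℂ, δ.re = 0 ∧ ∀ t : ℝ, 0 < t → (x + t * δ).im ≠ 0 := by
  rcases le_or_gt 0 x.im with h | h
  · refine ⟨Complex.I, by simp, fun t ht => ?_⟩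
    simp only [Complex.add_im, Complex.im_ofReal_mul, Complex.I_im]
    linarith
  · refine ⟨-Complex.I, by simp, fun t ht => ?_⟩
    simp only [Complex.add_im, Complex.im_ofReal_mul, Complex.neg_im, Complex.I_im]
    linarith

lemma exists_homotopicRel_addRoot_add_smul (hK : ∀ σ ∉ K, 2 ≤ σ.card) (hx : B < x.re)
    (hδ : δ.re = 0) (F : C(P, PolSp K (raise D i))) (a : C(P, Coeffs D)) (μ : C(P, unitInterval))
    (hF : ∀ p, μ p ≠ 0 → a p ∈ HalfPolSp K D B ∧ F p = addRoot i x (a p)) {S : Set P}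
    (hS : ∀ p ∈ S, μ p = 0) :
    ∃ F' : C(P, PolSp K (raise D i)), F.HomotopicRel F' S ∧
      ∀ p, F p = addRoot i x (a p) → F' p = addRoot i (x + (μ p : ℝ) * δ) (a p) := by
  obtain ⟨F', hF', hFF'⟩ := exists_homotopicRel_add F (S := S)
    (b := fun p => ((μ p : ℝ) : ℂ) • (addRoot i (x + δ) (a p) - addRoot i x (a p)))
    (by fun_prop) (fun p hp => by simp [hS p hp]) fun p s _ => by
      by_cases hμ : μ p = 0
      · simp [hμ]
      · rw [(hF p hμ).2, ← Complex.coe_smul, smul_smul, addRoot_add_smul]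
        refine addRoot_mem_of_mem_HalfPolSp hK (B := B) ?_ (hF p hμ).1
        rw [← Complex.ofReal_mul]
        simpa [hδ] using hx
  exact ⟨F', hFF', fun p hp => by rw [hF', hp, addRoot_add_smul]⟩

lemma exists_forall_mem_HalfPolSp [CompactSpace P] (g : C(P, PolSp K D)) (B : ℝ) :
    ∃ M : ℝ, 0 ≤ M ∧ ∀ p, (g p).1 ∈ HalfPolSp K D (B + M) := by
  obtain ⟨R, hR⟩ := isCompact_univ.exists_bound_of_continuousOn
    (f := fun p => (g p).1) (by fun_prop)
  refine ⟨max 0 (R + 2 - B), le_max_left _ _, fun p => ⟨(g p).2, fun k z hz => ?_⟩⟩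
  calc z.re ≤ ‖z‖ := Complex.re_le_norm z
    _ ≤ ‖(g p).1 k‖ + 1 := norm_le_of_isRoot_toPoly hz
    _ ≤ R + 1 := by gcongr; exact (norm_le_pi_norm _ k).trans (hR p trivial)
    _ < B + max 0 (R + 2 - B) := by linarith [le_max_right 0 (R + 2 - B)]

/-- As long as the new root is off the real axis, the others may be translated freely. -/
lemma exists_homotopicRel_addRootMap_comp [CompactSpace P] (hK : ∀ σ ∉ K, 2 ≤ σ.card)
    (hx : B < x.re) (hδ : δ.re = 0) (hδx : ∀ t : ℝ, 0 < t → (x + t * δ).im ≠ 0)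
    (g : C(P, PolSp K D)) (γ : C(P, unitInterval)) (hg : ∀ p, γ p ≠ 1 → (g p).1 ∈ HalfPolSp K D B)
    (F : C(P, PolSp K (raise D i))) (hF : ∀ p, F p = addRoot i (x + (γ p : ℝ) * δ) (g p).1)
    {S : Set P} (hS : ∀ p ∈ S, γ p = 0) :
    ∃ G : C(P, HalfPolSp K D B), (∀ p ∈ S, (G p).1 = (g p).1) ∧
      F.HomotopicRel ((addRootMap i hK hx).comp G) S := by
  obtain ⟨M, hM, hgM⟩ := exists_forall_mem_HalfPolSp g B
  have hhalf (s : unitInterval) (p : P) (h : γ p ≠ 1 ∨ s = 1) :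
      translate (s * (γ p * M)) (g p).1 ∈ HalfPolSp K D B := by
    apply translate_mem_HalfPolSp
    by_cases hγ : γ p = 1
    · simpa [h.resolve_left (not_not.2 hγ), hγ] using hgM p
    · exact HalfPolSp_mono (by nlinarith [mul_nonneg s.2.1 (mul_nonneg (γ p).2.1 hM)]) (hg p hγ)
  refine ⟨⟨fun p => ⟨translate (γ p * M) (g p).1, by simpa using hhalf 1 p (.inr rfl)⟩,
    by fun_prop⟩, fun p hp => by simp [hS p hp, translate_zero], ?_⟩
  refine homotopicRel_of_forall_mem (fun s p => addRoot i
    (x + ((1 - s) * γ p : ℝ) * δ) (translate (s * (γ p * M)) (g p).1)) (by fun_prop)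
    (fun s p => ?_) (fun p => ?_) (fun p => ?_) (fun s p hp => ?_)
  · by_cases h : γ p ≠ 1 ∨ s = 1
    · refine addRoot_mem_of_mem_HalfPolSp hK ?_ (hhalf s p h)
      simpa [hδ] using hx
    · push Not at h
      refine addRoot_mem_PolSp hK (translate_mem_PolSp _ (g p).2) fun him =>
        absurd him (hδx _ ?_)
      rw [h.1, Set.Icc.coe_one, mul_one, sub_pos]
      exact lt_of_le_of_ne s.2.2 fun h1 => h.2 (Subtype.ext h1)
  · simp [hF, translate_zero]
  · simp [addRootMap]
  · simp [hF, hS p hp, translate_zero]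

end MovingTheNewRoot

section Compression

variable {r : ℕ} {K : Set (Finset (Fin r))} {D : Fin r → ℕ} {i : Fin r} {B : ℝ} {x δ : ℂ}
  {ι : Type*} [Fintype ι] {m ρ : ℕ}

lemma exists_homotopicRel_addRoot_clamp (hm : ∀ k, m ≤ D k)
    (hdim : Fintype.card ι < 2 * m * ρ) (hK : ∀ σ ∉ K, ρ + 1 ≤ σ.card)
    (hK₂ : ∀ σ ∉ K, 2 ≤ σ.card) (hx : B < x.re) (hδ : δ.re = 0) (hδx : (x + δ).im ≠ 0)
    (F : C(ι → unitInterval, PolSp K (raise D i))) (a : C(ι → unitInterval, Coeffs D))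
    {c : (ι → unitInterval) → ℝ} (hc : Continuous c)
    (hF : ∀ p, c p ≤ 3 → a p ∈ HalfPolSp K D B ∧ F p = addRoot i x (a p)) :
    ∃ F' : C(ι → unitInterval, PolSp K (raise D i)), F.HomotopicRel F' {p | c p ≤ 0} ∧
      (∀ p, c p ≤ 1 → F' p = addRoot i (x + (clamp (c p) : ℝ) * δ) (a p)) ∧
      ∀ p, 1 ≤ c p → (toPoly ((F' p).1 i)).IsRoot (x + δ) := by
  let μ : C(ι → unitInterval, unitInterval) :=
    ⟨fun p => clamp (c p) * clamp (3 - c p), by fun_prop⟩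
  obtain ⟨F₁, hFF₁, hF₁⟩ := exists_homotopicRel_addRoot_add_smul hK₂ hx hδ F a μ
    (fun p hp => hF p <| by
      by_contra! hcp
      exact hp (by simp [μ, clamp_of_nonpos (show 3 - c p ≤ 0 by linarith)]))
    (S := {p | c p ≤ 0}) (fun p hp => by simp [μ, clamp_of_nonpos hp])
  have hF₁a (p) (hp : c p ≤ 2) : F₁ p = addRoot i (x + (clamp (c p) : ℝ) * δ) (a p) := by
    rw [hF₁ p (hF p (by linarith)).2]
    simp [μ, clamp_of_one_le (show 1 ≤ 3 - c p by linarith)]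
  obtain ⟨F₂, hF₁F₂, hF₂⟩ := exists_homotopicRel_forall_isRoot (i := i) (m := m)
    (fun k => (hm k).trans (by unfold raise; split_ifs <;> lia))
    (by simpa [raise] using hm i) hdim hK hδx F₁ (c := fun p => c p - 1) (by fun_prop)
    fun p h₀ h₁ => by
      rw [hF₁a p (by linarith), isRoot_toPoly_addRoot, clamp_of_one_le (by linarith)]
      simp
  refine ⟨F₂, hFF₁.trans (homotopicRel_mono hF₁F₂ fun p hp => ?_), fun p hp => ?_,
    fun p hp => hF₂ p (by linarith)⟩
  · simpa using (le_trans hp zero_le_one : c p ≤ 1)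
  · rw [← hF₁F₂.some.fst_eq_snd (show c p - 1 ≤ 0 by linarith)]
    exact hF₁a p (by linarith)

lemma exists_homotopicRel_comp_of_eq_addRoot (hm : ∀ k, m ≤ D k)
    (hdim : Fintype.card ι < 2 * m * ρ) (hK : ∀ σ ∉ K, ρ + 1 ≤ σ.card)
    (hK₂ : ∀ σ ∉ K, 2 ≤ σ.card) (hx : B < x.re) (F : C(ι → unitInterval, PolSp K (raise D i)))
    (a : C(ι → unitInterval, Coeffs D)) {c : (ι → unitInterval) → ℝ} (hc : Continuous c)
    (hF : ∀ p, c p ≤ 3 → a p ∈ HalfPolSp K D B ∧ F p = addRoot i x (a p)) :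
    ∃ G : C(ι → unitInterval, HalfPolSp K D B), (∀ p, c p ≤ 0 → (G p).1 = a p) ∧
      F.HomotopicRel ((addRootMap i hK₂ hx).comp G) {p | c p ≤ 0} := by
  obtain ⟨δ, hδ, hδx⟩ := exists_re_eq_zero_forall_add_mul_im_ne_zero x
  obtain ⟨F', hFF', hF'a, hF'root⟩ := exists_homotopicRel_addRoot_clamp hm hdim hK hK₂ hx hδ
    (by simpa using hδx 1 one_pos) F a hc hF
  let y (p : ι → unitInterval) : ℂ := x + (clamp (c p) : ℝ) * δ
  have hroot (p) : (toPoly ((F' p).1 i)).IsRoot (y p) := by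
    rcases le_total (c p) 1 with hp | hp
    · rw [hF'a p hp, isRoot_toPoly_addRoot]
      exact .inr ⟨rfl, rfl⟩
    · simpa [y, clamp_of_one_le hp] using hF'root p hp
  have hremove (p) (hp : c p ≤ 1) : removeRoot i (y p) (F' p).1 = a p := by
    rw [hF'a p hp, removeRoot_addRoot]
  have hadd (p) : addRoot i (y p) (removeRoot i (y p) (F' p).1) = F' p :=
    addRoot_removeRoot (hroot p)
  let g : C(ι → unitInterval, PolSp K D) := ⟨fun p => ⟨removeRoot i (y p) (F' p).1,
    mem_PolSp_of_addRoot_mem (by rw [hadd p]; exact (F' p).2)⟩,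
    (continuous_removeRoot (by fun_prop) (by fun_prop)).subtype_mk _⟩
  obtain ⟨G, hG, hF'G⟩ := exists_homotopicRel_addRootMap_comp hK₂ hx hδ hδx g
    (clamp.comp ⟨c, hc⟩)
    (fun p hp => by
      have hcp : c p < 1 := by
        by_contra! hcp
        exact hp (clamp_of_one_le hcp)
      simpa [g, hremove p hcp.le] using (hF p (by linarith)).1)
    F' (fun p => (hadd p).symm) (S := {p | c p ≤ 0}) fun p hp => clamp_of_nonpos hp
  exact ⟨G, fun p hp => (hG p hp).trans (hremove p (le_trans hp zero_le_one)), hFF'.trans hF'G⟩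

end Compression

section RelativeLifting

variable {P X X' Y : Type*} [TopologicalSpace P] [TopologicalSpace X] [TopologicalSpace X']
  [TopologicalSpace Y]

/-- The compression property of `q : X → Y` for the pair `(P, S)`: a map `P → Y` which is lifted
to `X` over `S` is homotopic rel `S` to a map with a lift extending the given one. -/
def LiftsRel (q : C(X, Y)) (S : Set P) : Prop :=
  ∀ (f : C(P, Y)) (e : C(S, X)), (∀ p : S, f p = q (e p)) →
    ∃ E : C(P, X), (∀ p : S, E p = e p) ∧ f.HomotopicRel (q.comp E) S

lemma LiftsRel.comp_homeomorph {q : C(X, Y)} {S : Set P} (hq : LiftsRel q S) (h : X' ≃ₜ X) :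
    LiftsRel (q.comp (h : C(X', X))) S := fun f e hfe => by
  obtain ⟨E, hE, hfE⟩ := hq f ((h : C(X', X)).comp e) hfe
  refine ⟨(h.symm : C(X, X')).comp E, fun p => by simp [hE], ?_⟩
  convert hfE using 1
  ext p
  simp

end RelativeLifting

section Compression

variable {r : ℕ} {K : Set (Finset (Fin r))} {D : Fin r → ℕ} {i : Fin r} {B : ℝ} {x : ℂ}

lemma isOpen_HalfPolSp : IsOpen (HalfPolSp K D B) := by
  have hroots (k : Fin r) :
      IsOpen {b : Fin (D k) → ℂ | ∀ z, (toPoly b).IsRoot z → z.re < B} :=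
    isOpen_setOf_forall_isRoot_mem (U := {z | z.re < B})
      (isOpen_lt Complex.continuous_re continuous_const)
  refine isOpen_PolSp.inter ?_
  rw [Set.ofPred_forall]
  exact isOpen_iInter_of_finite fun k =>
    (hroots k).preimage (continuous_apply k : Continuous fun a : Coeffs D => a k)

lemma eventually_add_smul_sub_mem_PolSp {P : Type*} [TopologicalSpace P] (f : C(P, PolSp K D))
    {g : P → Coeffs D} (hg : Continuous g) {p : P} (hp : g p = f p) :
    ∀ᶠ q in 𝓝 p, ∀ s ∈ Set.Icc (0 : ℝ) 1, (f q).1 + s • (g q - f q) ∈ PolSp K D := by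
  refine isCompact_Icc.eventually_forall_of_forall_eventually fun s _ => ?_
  have hcont : Continuous fun z : P × ℝ => (f z.1).1 + z.2 • (g z.1 - f z.1) := by fun_prop
  refine hcont.continuousAt.eventually (isOpen_PolSp.mem_nhds ?_)
  simp [hp]

theorem liftsRel_addRootMap {ι : Type*} [Fintype ι] {m ρ : ℕ} (hm : ∀ k, m ≤ D k)
    (hdim : Fintype.card ι < 2 * m * ρ) (hK : ∀ σ ∉ K, ρ + 1 ≤ σ.card)
    (hK₂ : ∀ σ ∉ K, 2 ≤ σ.card) (hx : B < x.re) {S : Set (ι → unitInterval)} (hS : IsClosed S) :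
    LiftsRel (addRootMap (D := D) i hK₂ hx) S := fun f e hfe => by
  obtain ⟨a, ha⟩ := ContinuousMap.exists_restrict_eq hS
    (⟨fun p => (e p).1, by fun_prop⟩ : C(S, Coeffs D))
  have hae (p : S) : a p = (e p).1 := DFunLike.congr_fun ha p
  have hfa (p : S) : addRoot i x (a p) = f p := by rw [hae, hfe]; rfl
  let U : Set (ι → unitInterval) := {p | a p ∈ HalfPolSp K D B ∧
    ∀ s ∈ Set.Icc (0 : ℝ) 1, (f p).1 + s • (addRoot i x (a p) - f p) ∈ PolSp K (raise D i)}
  have hSU : S ⊆ interior U := fun p hp => mem_interior_iff_mem_nhds.2 <|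
    (a.continuous.continuousAt.eventually
      (isOpen_HalfPolSp.mem_nhds (hae ⟨p, hp⟩ ▸ (e _).2))).and
    (eventually_add_smul_sub_mem_PolSp f (by fun_prop) (hfa ⟨p, hp⟩))
  obtain ⟨u, huS, huU, hu⟩ := exists_continuous_zero_one_of_isClosed hS
    isOpen_interior.isClosed_compl (Set.disjoint_compl_right_iff_subset.2 hSU)
  have hmem (p) (hp : u p < 1) : p ∈ U := interior_subset <| by
    by_contra h
    exact hp.ne (huU h)
  obtain ⟨F, hF, hfF⟩ := exists_homotopicRel_add f (S := S)
    (b := fun p => (clamp (4 - 4 * u p) : ℝ) • (addRoot i x (a p) - f p)) (by fun_prop)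
    (fun p hp => by simp [hfa ⟨p, hp⟩]) fun p s hs => by
      rcases (hu p).2.lt_or_eq with hp | hp
      · rw [smul_smul]
        exact (hmem p hp).2 _ (unitInterval.mul_mem hs (clamp _).2)
      · simp [hp, clamp_of_nonpos]
  obtain ⟨E, hE, hFE⟩ := exists_homotopicRel_comp_of_eq_addRoot hm hdim hK hK₂ hx F a
    (c := fun p => 4 * u p) (by fun_prop) fun p hp => by
      refine ⟨(hmem p (by linarith)).1, ?_⟩
      rw [hF, clamp_of_one_le (by linarith)]
      simp
  have hSc : S ⊆ {p | 4 * u p ≤ 0} := fun p hp => by simp [huS hp]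
  exact ⟨E, fun p => Subtype.ext ((hE p (hSc p.2)).trans (hae p)),
    hfF.trans (homotopicRel_mono hFE hSc)⟩

end Compression

section HomotopyGroups

variable {X Y : Type*} [TopologicalSpace X] [TopologicalSpace Y] {q : C(X, Y)} {k : ℕ} {x : X}
  {F₀ F₁ : C(Fin k → unitInterval, X)}

lemma isClosed_boundary {ι : Type*} [Finite ι] : IsClosed (Cube.boundary ι) := by
  have h : Cube.boundary ι = ⋃ j, {p | p j = 0} ∪ {p | p j = 1} := by
    ext p
    simp [Cube.boundary]
  rw [h]
  exact isClosed_iUnion_of_finite fun j =>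
    (isClosed_eq (continuous_apply j) continuous_const).union
      (isClosed_eq (continuous_apply j) continuous_const)

lemma mem_boundary_succ {z : Fin (k + 1) → unitInterval} :
    z ∈ Cube.boundary (Fin (k + 1)) ↔
      (z 0 = 0 ∨ z 0 = 1) ∨ (fun j => z (Fin.succ j)) ∈ Cube.boundary (Fin k) := by
  simp [Cube.boundary, Fin.exists_fin_succ]

lemma exists_continuous_boundary_succ (h₀ : ∀ p ∈ Cube.boundary (Fin k), F₀ p = x)
    (h₁ : ∀ p ∈ Cube.boundary (Fin k), F₁ p = x) :
    ∃ e : C(Cube.boundary (Fin (k + 1)), X),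
      (∀ z, z.1 0 = 0 → e z = F₀ fun j => z.1 j.succ) ∧
      (∀ z, z.1 0 = 1 → e z = F₁ fun j => z.1 j.succ) ∧
      ∀ z, (fun j => z.1 (Fin.succ j)) ∈ Cube.boundary (Fin k) → e z = x := by
  have hcont : Continuous fun z : Cube.boundary (Fin (k + 1)) =>
      if (z.1 0 : ℝ) ≤ 1 / 2 then F₀ fun j => z.1 j.succ else F₁ fun j => z.1 j.succ := by
    have hcoord (j : Fin (k + 1)) :
        Continuous fun z : Cube.boundary (Fin (k + 1)) => z.1 j :=
      (continuous_apply j).comp continuous_subtype_val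
    have htail := continuous_pi fun j : Fin k => hcoord j.succ
    refine Continuous.if_le (F₀.continuous.comp htail) (F₁.continuous.comp htail)
      (continuous_subtype_val.comp (hcoord 0)) continuous_const fun z hz => ?_
    have hside := (mem_boundary_succ.1 z.2).resolve_left
      (by rintro (h | h) <;> norm_num [h] at hz)
    rw [h₀ _ hside, h₁ _ hside]
  refine ⟨⟨_, hcont⟩, fun z hz => by simp [hz], fun z hz => by norm_num [hz], fun z hz => ?_⟩
  simp [h₀ _ hz, h₁ _ hz]

lemma homotopicRel_of_liftsRel (hq : LiftsRel q (Cube.boundary (Fin (k + 1))))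
    (h₀ : ∀ p ∈ Cube.boundary (Fin k), F₀ p = x) (h₁ : ∀ p ∈ Cube.boundary (Fin k), F₁ p = x)
    (hF : (q.comp F₀).HomotopicRel (q.comp F₁) (Cube.boundary (Fin k))) :
    F₀.HomotopicRel F₁ (Cube.boundary (Fin k)) := by
  obtain ⟨H⟩ := hF
  obtain ⟨e, he_zero, he_one, he_side⟩ := exists_continuous_boundary_succ h₀ h₁
  obtain ⟨E, hE, -⟩ := hq ⟨fun z => H (z 0, fun j => z j.succ), by fun_prop⟩ e fun z => by
    rcases mem_boundary_succ.1 z.2 with (hz | hz) | hz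
    · simp [he_zero z hz, hz]
    · simp [he_one z hz, hz]
    · simp [he_side z hz, H.eq_fst _ hz, h₀ _ hz]
  have hEe (t : unitInterval) (p : Fin k → unitInterval)
      (h : (t = 0 ∨ t = 1) ∨ p ∈ Cube.boundary (Fin k)) :
      E (Fin.cons t p) = e ⟨Fin.cons t p, mem_boundary_succ.2 h⟩ := hE ⟨_, _⟩
  have hcons : Continuous fun z : unitInterval × (Fin k → unitInterval) =>
      (Fin.cons z.1 z.2 : Fin (k + 1) → unitInterval) :=
    Continuous.finCons (A := fun _ => unitInterval) continuous_fst continuous_snd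
  refine ⟨⟨⟨⟨fun z => E (Fin.cons z.1 z.2), E.continuous.comp hcons⟩, fun p => ?_, fun p => ?_⟩,
    fun t p hp => ?_⟩⟩
  · exact (hEe 0 p (.inl (.inl rfl))).trans (he_zero _ rfl)
  · exact (hEe 1 p (.inl (.inr rfl))).trans (he_one _ rfl)
  · exact ((hEe t p (.inr hp)).trans (he_side _ hp)).trans (h₀ p hp).symm

theorem bijective_piMap_of_liftsRel (hk : LiftsRel q (Cube.boundary (Fin k)))
    (hk' : LiftsRel q (Cube.boundary (Fin (k + 1)))) (x : X) :
    Function.Bijective (piMap k q x) := by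
  refine ⟨fun α β => ?_, fun α => ?_⟩
  · induction α, β using Quotient.inductionOn₂ with
    | _ F₀ F₁ =>
    exact fun h => Quotient.sound (homotopicRel_of_liftsRel hk' F₀.2 F₁.2 (Quotient.exact h))
  · induction α using Quotient.inductionOn with
    | _ F =>
    obtain ⟨E, hE, hFE⟩ := hk F.1 (ContinuousMap.const _ x) fun p => F.2 p p.2
    exact ⟨Quotient.mk _ ⟨E, fun p hp => hE ⟨p, hp⟩⟩, Quotient.sound hFE.symm⟩

end HomotopyGroups

section Transport

variable {r : ℕ} {K : Set (Finset (Fin r))} {D : Fin r → ℕ} {i : Fin r} {B : ℝ} {φ : ℂ → ℂ}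

namespace AdmissiblePhi

lemma re_lt (hφ : AdmissiblePhi B φ) (z : ℂ) : (φ z).re < B :=
  hφ.2.2.2.1.subset (Set.mem_range_self z)

lemma apply_invFun (hφ : AdmissiblePhi B φ) {w : ℂ} (hw : w.re < B) :
    φ (Function.invFun φ w) = w :=
  Function.invFun_eq (hφ.2.2.2.1.superset hw)

lemma invFun_apply (hφ : AdmissiblePhi B φ) (z : ℂ) : Function.invFun φ (φ z) = z :=
  Function.leftInverse_invFun hφ.2.1 z

lemma im_eq_zero_iff (hφ : AdmissiblePhi B φ) {z : ℂ} : (φ z).im = 0 ↔ z.im = 0 := by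
  have h : φ z ∈ φ '' {z | z.im = 0} ↔ z.im = 0 := hφ.2.1.mem_set_image
  rw [← h, hφ.2.2.2.2]
  exact (and_iff_left (hφ.re_lt z)).symm

lemma continuousOn_invFun (hφ : AdmissiblePhi B φ) :
    ContinuousOn (Function.invFun φ) {w | w.re < B} := fun w hw => by
  have hemb : IsOpenEmbedding φ := .of_continuous_injective_isOpenMap hφ.1 hφ.2.1 hφ.2.2.1
  refine ContinuousAt.continuousWithinAt ?_
  rw [← hφ.apply_invFun hw, ← hemb.continuousAt_iff,
    show Function.invFun φ ∘ φ = id from funext hφ.invFun_apply]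
  exact continuousAt_id

end AdmissiblePhi

lemma mapRoots_mem_PolSp {θ η : ℂ → ℂ} {a : Coeffs D} (ha : a ∈ PolSp K D)
    (hK : ∀ σ ∉ K, σ.Nonempty) (hη : ∀ k z, (toPoly (a k)).IsRoot z → η (θ z) = z)
    (him : ∀ k z, (toPoly (a k)).IsRoot z → (θ z).im = 0 → z.im = 0) :
    (fun k => mapRoots θ (a k)) ∈ PolSp K D := fun σ hσ t => by
  by_contra! hzero
  have hroot (k) (hk : k ∈ σ) : (toPoly (a k)).IsRoot (η t) ∧ θ (η t) = t := by
    obtain ⟨z, hz, hzt⟩ := isRoot_toPoly_mapRoots.1 (hzero k hk)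
    have hηt : η t = z := by rw [← hzt, hη k z hz]
    exact hηt ▸ ⟨hz, hzt⟩
  obtain ⟨k₀, hk₀⟩ := hK σ hσ
  have hreal : ((η t).re : ℂ) = η t :=
    Complex.ext rfl (him k₀ _ (hroot k₀ hk₀).1 (by simp [(hroot k₀ hk₀).2])).symm
  obtain ⟨k, hk, hne⟩ := ha σ hσ (η t).re
  exact hne (hreal ▸ (hroot k hk).1)

/-- The identification of `Pol*_D` with its subspace of tuples whose roots lie in `Re z < B`,
obtained by applying `φ` to the roots of each polynomial. -/
def polSpHomeomorph (hφ : AdmissiblePhi B φ) (hK : ∀ σ ∉ K, σ.Nonempty) :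
    PolSp K D ≃ₜ HalfPolSp K D B where
  toFun a := ⟨fun k => mapRoots φ (a.1 k),
    mapRoots_mem_PolSp a.2 hK (fun _ z _ => hφ.invFun_apply z) fun _ _ _ => hφ.im_eq_zero_iff.1,
    fun k w hw => by
      obtain ⟨z, -, rfl⟩ := isRoot_toPoly_mapRoots.1 hw
      exact hφ.re_lt z⟩
  invFun b := ⟨fun k => mapRoots (Function.invFun φ) (b.1 k),
    mapRoots_mem_PolSp b.2.1 hK (fun k z hz => hφ.apply_invFun (b.2.2 k z hz)) fun k z hz h => by
      rwa [← hφ.im_eq_zero_iff, hφ.apply_invFun (b.2.2 k z hz)] at h⟩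
  left_inv a := Subtype.ext <| funext fun _ =>
    mapRoots_mapRoots_eq_self fun z _ => hφ.invFun_apply z
  right_inv b := Subtype.ext <| funext fun k =>
    mapRoots_mapRoots_eq_self fun z hz => hφ.apply_invFun (b.2.2 k z hz)
  continuous_toFun := by
    refine Continuous.subtype_mk (continuous_pi fun k => ?_) _
    exact (continuousOn_mapRoots (U := Set.univ) hφ.1.continuousOn).comp_continuous
      ((continuous_apply k).comp continuous_subtype_val) fun _ _ _ => trivial
  continuous_invFun := by
    refine Continuous.subtype_mk (continuous_pi fun k => ?_) _
    exact (continuousOn_mapRoots hφ.continuousOn_invFun).comp_continuous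
      ((continuous_apply k).comp continuous_subtype_val) fun b => b.2.2 k

lemma exists_homeomorph_eq_addRootMap_comp (hφ : AdmissiblePhi B φ) {x : ℂ} (hx : B < x.re)
    (hK : ∀ σ ∉ K, 2 ≤ σ.card) {s : C(PolSp K D, PolSp K (raise D i))}
    (hs : StabSpec K φ (fun _ => x) D (raise D i) s) :
    ∃ h : PolSp K D ≃ₜ HalfPolSp K D B,
      s = (addRootMap i hK hx).comp (h : C(PolSp K D, HalfPolSp K D B)) := by
  refine ⟨polSpHomeomorph hφ fun σ hσ => Finset.card_pos.1 (two_pos.trans_le (hK σ hσ)), ?_⟩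
  ext1 a
  refine Subtype.ext (funext fun k => toPoly_injective ?_)
  refine ((hs a k).trans ?_).trans (toPoly_addRoot ..).symm
  change _ = toPoly (mapRoots φ (a.1 k)) * linearFactor i x k
  rw [toPoly_mapRoots, linearFactor]
  split_ifs with hk <;> simp [hk]

lemma rmin_le_card {σ : Finset (Fin r)} (hσ : σ ∉ K) : rmin K ≤ σ.card := by
  induction σ using Finset.strongInduction with
  | H σ ih =>
  by_cases h : ∀ τ ⊂ σ, τ ∈ K
  · exact Nat.sInf_le ⟨σ, ⟨hσ, h⟩, rfl⟩
  · push Not at h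
    obtain ⟨τ, hτσ, hτ⟩ := h
    exact (ih τ hτσ hτ).trans (Finset.card_le_card hτσ.subset)

lemma exists_rmin_eq_of_le_dBound {k : ℕ} (hk : (k : ℤ) ≤ dBound K D) :
    ∃ ρ, 0 < ρ ∧ rmin K = ρ + 1 ∧ k + 1 < 2 * dmin D * ρ := by
  unfold dBound at hk
  have hpos : 1 < (rmin K : ℤ) := by
    by_contra! h
    nlinarith
  refine ⟨rmin K - 1, by omega, by omega, ?_⟩
  zify [show 1 ≤ rmin K by omega]
  nlinarith

end Transport

theorem stabilization_single_homotopyEquiv_through_general {r : ℕ} (K : Set (Finset (Fin r)))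
    (D : Fin r → ℕ) (i : Fin r) {B : ℝ} {φ : ℂ → ℂ} (hφ : AdmissiblePhi B φ)
    {x : ℂ} (hx : B < x.re)
    (s : C(PolSp K D, PolSp K fun k => if k = i then D k + 1 else D k))
    (hs : StabSpec K φ (fun _ => x) D (fun k => if k = i then D k + 1 else D k) s) :
    HomotopyEquivThrough s (dBound K D) := fun a k hk => by
  obtain ⟨ρ, hρ₀, hρ, hdim⟩ := exists_rmin_eq_of_le_dBound hk
  have hm (j : Fin r) : dmin D ≤ D j := Nat.sInf_le ⟨j, rfl⟩
  have hK (σ) (hσ : σ ∉ K) : ρ + 1 ≤ σ.card := hρ ▸ rmin_le_card hσ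
  have hK₂ (σ) (hσ : σ ∉ K) : 2 ≤ σ.card := (Nat.succ_le_succ hρ₀).trans (hK σ hσ)
  obtain ⟨h, hsh⟩ := exists_homeomorph_eq_addRootMap_comp hφ hx hK₂ hs
  have hlift (j : ℕ) (hj : j ≤ k + 1) : LiftsRel s (Cube.boundary (Fin j)) := by
    rw [hsh]
    refine (liftsRel_addRootMap hm ?_ hK hK₂ hx isClosed_boundary).comp_homeomorph h
    rw [Fintype.card_fin]
    omega
  exact bijective_piMap_of_liftsRel (hlift k k.le_succ) (hlift (k + 1) le_rfl) a

/-- The stabilization map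
`s_{D,i} : Pol*_D(S¹,X_Σ) → Pol*_{D+e_i}(S¹,X_Σ)` is a homotopy equivalence through
dimension `d(D,Σ) = 2(r_min(Σ)−1)d_min − 2`, for any admissible choice of `(φ_D, x_D)`. -/
theorem stabilization_single_homotopyEquiv_through
    {n r : ℕ} (F : Fan n) (N : Fin r → Fin n → ℤ)
    (hPG : IsPrimGens F N) (h1 : Cond1 N) (h2 : Cond2 N)
    (D : Fin r → ℕ) (hD : ∀ k, 0 < D k) (i : Fin r)
    (φ : ℂ → ℂ) (hφ : AdmissiblePhi ((∑ k, D k : ℕ) : ℝ) φ)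
    (x : ℂ) (hx : ((∑ k, D k : ℕ) : ℝ) < x.re)
    (s : C(↥(PolSp (KC F N) D),
        ↥(PolSp (KC F N) fun k => if k = i then D k + 1 else D k)))
    (hs : StabSpec (KC F N) φ (fun _ => x) D
        (fun k => if k = i then D k + 1 else D k) ⇑s) :
    HomotopyEquivThrough s (dBound (KC F N) D) :=
  stabilization_single_homotopyEquiv_through_general (KC F N) D i hφ hx s hs

end Toric
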